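/- Let Ω, ω, u, λ, ū be as in the context, and let φ be the first Neumann eigenfunction of −(ωφ')' = μωφ on (0,1) (φ ∈ C¹([0,1]), φ'(0) = φ'(1) = 0, ωφ' differentiable on (0,1) with (ωφ')' = −μωφ there, μ the smallest positive eigenvalue), normalized so that φ(0) = lim_{x→0+} ū(x) > 0, and let s₁ be the unique zero of φ in (0,1). If (x,y) ∈ Ω and u(x,y) = 0, then |x − s₁| ≤ Cε, with C depending only on n. In particular, the projection of the nodal set Λ = {(x,y) ∈ Ω : u(x,y) = 0} onto the x-axis has diameter at most Cε. -/

import Mathlib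

open MeasureTheory Set Filter Topology RealInnerProductSpace

noncomputable section

/-- The point `(x, y) ∈ ℝ × ℝ^m ≅ ℝ^{m+1}`. -/
def mkPt (m : ℕ) (x : ℝ) (y : EuclideanSpace ℝ (Fin m)) : EuclideanSpace ℝ (Fin (m+1)) :=
  (EuclideanSpace.equiv (Fin (m+1)) ℝ).symm (Fin.cons x ((EuclideanSpace.equiv (Fin m) ℝ) y))

/-- The cross-section `Ω(s) = {y : (s, y) ∈ Ω}`. -/
def cross {m : ℕ} (Ω : Set (EuclideanSpace ℝ (Fin (m+1)))) (s : ℝ) :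
    Set (EuclideanSpace ℝ (Fin m)) := {y | mkPt m s y ∈ Ω}

/-- `ω(s)`: the (n-1)-dimensional volume of the cross-section `Ω(s)`. -/
def ωvol {m : ℕ} (Ω : Set (EuclideanSpace ℝ (Fin (m+1)))) (s : ℝ) : ℝ :=
  (volume (cross Ω s)).toReal

/-- The Laplacian, as the sum of the pure second derivatives along the standard basis. -/
def lap {k : ℕ} (u : EuclideanSpace ℝ (Fin k) → ℝ) (p : EuclideanSpace ℝ (Fin k)) : ℝ :=
  ∑ i, fderiv ℝ (fun q => fderiv ℝ u q (EuclideanSpace.single i 1)) p (EuclideanSpace.single i 1)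

/-- The cross-sectional average `ū(x)` of `u`. -/
def ubarFn {m : ℕ} (Ω : Set (EuclideanSpace ℝ (Fin (m+1))))
    (u : EuclideanSpace ℝ (Fin (m+1)) → ℝ) (x : ℝ) : ℝ :=
  (∫ y in cross Ω x, u (mkPt m x y)) / ωvol Ω x

/-- `(φ, φd)` is a (nonzero, C¹ on [0,1]) solution of the Neumann problem
`-(ω φ')' = μ ω φ` on (0,1), with `φ'(0) = φ'(1) = 0`. -/
def NeumannSol (ω : ℝ → ℝ) (μ : ℝ) (φ φd : ℝ → ℝ) : Prop :=
  (∀ x ∈ Icc (0:ℝ) 1, HasDerivWithinAt φ (φd x) (Icc 0 1) x) ∧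
  ContinuousOn φd (Icc 0 1) ∧ φd 0 = 0 ∧ φd 1 = 0 ∧
  (∃ x ∈ Icc (0:ℝ) 1, φ x ≠ 0) ∧
  ∀ x ∈ Ioo (0:ℝ) 1, HasDerivAt (fun t => ω t * φd t) (-(μ * ω x * φ x)) x

/-- `μ` is a Neumann eigenvalue of `-(ω φ')' = μ ω φ`. -/
def IsNeumannEigenvalue (ω : ℝ → ℝ) (μ : ℝ) : Prop := ∃ φ φd, NeumannSol ω μ φ φd

/-!
The first variation of the Rayleigh quotient at `u`, in directions depending on `x` alone, shows
that `-ω` times the cross-sectional average of `∂u/∂x` is a primitive of `λ ω ū`, with zero flux at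
both ends. A primitive `U` of that average stays within `O(ε) sup |u|` of `ū`, because a
homothety carries `Ω(x)` to `Ω(x + t)` up to a proportion `O(t / d)` of its volume, where
`d = min x (1 - x)`, while `u` oscillates by `O(ε d) sup |u|` on each cross-section with
`d > ε`. So `ū` solves the equation of `φ`, with `λ` in place of `μ`, up to an error
`O(ε) sup |u|`; moreover `λ ≤ μ`, since `φ` can be used in the Poincaré inequality on `Ω`.

Let `b` be the first point where `ū` is of size `O(ε) sup |u|`. If `b < s₁`, the Wronskian of `U`
and `φ` on `[0, b]` bounds `s₁ - b` by `O(ε)` times the ratio of `ω` on `[b, s₁]` to `λ ∫₀ᵇ ω ū`.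
By convexity of `Ω`, the cross-section volume `ω` grows at most like the `m`-th power of a concave
function, and `λ` is bounded below because `U` must descend from about `sup u` to about `inf u`;
hence the ratio is bounded by a constant over `sup u`. Reflecting `x ↦ 1 - x` handles points to the
right of `s₁`. Finally, `u` oscillates by `O(ε) sup |u|` on each cross-section, so a zero of `u`
forces `|ū|` to be that small.
-/

/-- `g` is continuous and bounded on `s`; on a bounded open set this is the working class of
integrands, since no value or limit on the boundary is prescribed. -/
def BddContinuousOn {X : Type*} [TopologicalSpace X] (g : X → ℝ) (s : Set X) : Prop :=
  ContinuousOn g s ∧ ∃ B, ∀ x ∈ s, |g x| ≤ B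

namespace BddContinuousOn

section Topology

variable {X : Type*} [TopologicalSpace X] {g h : X → ℝ} {s : Set X}

lemma const (k : ℝ) : BddContinuousOn (fun _ : X => k) s :=
  ⟨continuousOn_const, |k|, fun _ _ => le_rfl⟩

lemma mul (hg : BddContinuousOn g s) (hh : BddContinuousOn h s) :
    BddContinuousOn (fun x => g x * h x) s := by
  obtain ⟨A, hA⟩ := hg.2
  obtain ⟨B, hB⟩ := hh.2
  refine ⟨hg.1.mul hh.1, A * B, fun x hx => ?_⟩
  rw [abs_mul]
  exact mul_le_mul (hA x hx) (hB x hx) (abs_nonneg _) ((abs_nonneg _).trans (hA x hx))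

lemma pow_two (hg : BddContinuousOn g s) : BddContinuousOn (fun x => g x ^ 2) s := by
  simpa only [sq] using hg.mul hg

lemma add (hg : BddContinuousOn g s) (hh : BddContinuousOn h s) :
    BddContinuousOn (fun x => g x + h x) s := by
  obtain ⟨A, hA⟩ := hg.2
  obtain ⟨B, hB⟩ := hh.2
  exact ⟨hg.1.add hh.1, A + B, fun x hx =>
    (abs_add_le _ _).trans (add_le_add (hA x hx) (hB x hx))⟩

lemma mono {t : Set X} (hg : BddContinuousOn g s) (hts : t ⊆ s) : BddContinuousOn g t :=
  ⟨hg.1.mono hts, hg.2.imp fun _ hB x hx => hB x (hts hx)⟩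

lemma congr (hg : BddContinuousOn g s) (hgh : EqOn g h s) : BddContinuousOn h s :=
  ⟨hg.1.congr hgh.symm, hg.2.imp fun _ hB x hx => hgh hx ▸ hB x hx⟩

lemma comp {Y : Type*} [TopologicalSpace Y] {f : Y → X} {t : Set Y} (hg : BddContinuousOn g s)
    (hf : ContinuousOn f t) (hft : MapsTo f t s) : BddContinuousOn (fun y => g (f y)) t :=
  ⟨hg.1.comp hf hft, hg.2.imp fun _ hB _ hy => hB _ (hft hy)⟩

lemma of_isCompact (hs : IsCompact s) (hg : ContinuousOn g s) : BddContinuousOn g s :=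
  ⟨hg, hs.exists_bound_of_continuousOn hg⟩

lemma integrableOn [MeasurableSpace X] [OpensMeasurableSpace X] {ν : Measure X}
    (hg : BddContinuousOn g s) (hs : MeasurableSet s) (hν : ν s < ⊤) : IntegrableOn g s ν := by
  obtain ⟨B, hB⟩ := hg.2
  exact .of_bound hν (hg.1.aestronglyMeasurable hs) B
    ((ae_restrict_mem hs).mono fun x hx => hB x hx)

end Topology

section Interval

variable {g : ℝ → ℝ} {a b x y : ℝ}

lemma intervalIntegrable (hg : BddContinuousOn g (Ioo a b)) (hx : x ∈ Icc a b)
    (hy : y ∈ Icc a b) : IntervalIntegrable g volume x y := by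
  have hab : IntervalIntegrable g volume a b :=
    (intervalIntegrable_iff_integrableOn_Ioo_of_le (hx.1.trans hx.2)).2
      (hg.integrableOn measurableSet_Ioo measure_Ioo_lt_top)
  refine hab.mono_set ?_
  rw [uIcc_of_le (hx.1.trans hx.2)]
  exact uIcc_subset_Icc hx hy

lemma hasDerivAt_integral (hg : BddContinuousOn g (Ioo a b)) (hx : x ∈ Icc a b)
    (hy : y ∈ Ioo a b) : HasDerivAt (fun t => ∫ s in x..t, g s) (g y) y :=
  intervalIntegral.integral_hasDerivAt_right (hg.intervalIntegrable hx (Ioo_subset_Icc_self hy))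
    (hg.1.stronglyMeasurableAtFilter isOpen_Ioo y hy) (hg.1.continuousAt (isOpen_Ioo.mem_nhds hy))

lemma continuousOn_integral (hg : BddContinuousOn g (Ioo a b)) (hx : x ∈ Icc a b) :
    ContinuousOn (fun t => ∫ s in x..t, g s) (Icc a b) := by
  have hab := hx.1.trans hx.2
  have h := intervalIntegral.continuousOn_primitive_interval' (μ := volume) (a := x)
    (hg.intervalIntegrable (left_mem_Icc.2 hab) (right_mem_Icc.2 hab))
    (by rwa [uIcc_of_le hab])
  rwa [uIcc_of_le hab] at h

lemma integral_pos (hg : BddContinuousOn g (Ioo a b)) (hx : a ≤ x) (hxy : x < y) (hy : y ≤ b)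
    (hpos : ∀ t ∈ Ioo x y, 0 < g t) : 0 < ∫ t in x..y, g t :=
  intervalIntegral.intervalIntegral_pos_of_pos_on
    (hg.intervalIntegrable ⟨hx, hxy.le.trans hy⟩ ⟨hx.trans hxy.le, hy⟩) hpos hxy

lemma integral_mono (hg : BddContinuousOn g (Ioo a b)) {h : ℝ → ℝ}
    (hh : BddContinuousOn h (Ioo a b)) (hx : a ≤ x) (hxy : x ≤ y) (hy : y ≤ b)
    (hgh : ∀ t ∈ Ioo x y, g t ≤ h t) : ∫ t in x..y, g t ≤ ∫ t in x..y, h t :=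
  intervalIntegral.integral_mono_on_of_le_Ioo hxy
    (hg.intervalIntegrable ⟨hx, hxy.trans hy⟩ ⟨hx.trans hxy, hy⟩)
    (hh.intervalIntegrable ⟨hx, hxy.trans hy⟩ ⟨hx.trans hxy, hy⟩) hgh

end Interval

end BddContinuousOn
/-- A positive bounded continuous weight on `(0, 1)` whose growth is controlled from either end,
with the bounds enjoyed by the `m`-th power of a concave function; the prototype is
`x ↦ |Ω(x)|` for a convex body. -/
structure DoublingWeight (m : ℕ) (ω : ℝ → ℝ) : Prop where
  bddContinuousOn : BddContinuousOn ω (Ioo 0 1)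
  pos : ∀ x ∈ Ioo (0 : ℝ) 1, 0 < ω x
  le_right : ∀ s t, 0 < s → s < t → t < 1 → ω s ≤ (2 / (1 - t)) ^ m * ω t
  le_left : ∀ s t, 0 < s → s < t → t < 1 → ω t ≤ (2 / s) ^ m * ω s

/-- The integrated form `ω U' = -μ ∫₀ˣ ω v`, with zero flux at both ends, of the Neumann problem
`-(ω U')' = μ ω v` on `(0, 1)`. For `v = U` this is the eigenvalue equation; keeping `v` apart
from `U` also covers cross-sectional averages, which satisfy it up to an error `v - U`. -/
structure IsFluxSolution (ω : ℝ → ℝ) (μ : ℝ) (v U : ℝ → ℝ) : Prop where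
  bddContinuousOn : BddContinuousOn v (Ioo 0 1)
  continuousOn : ContinuousOn U (Icc 0 1)
  hasDerivAt : ∀ x ∈ Ioo (0 : ℝ) 1, HasDerivAt U (-(μ * ∫ t in 0..x, ω t * v t) / ω x) x
  integral_eq_zero : ∫ t in (0 : ℝ)..1, ω t * v t = 0

section Reflection

lemma one_sub_mem_Ioo {x : ℝ} (hx : x ∈ Ioo (0 : ℝ) 1) : 1 - x ∈ Ioo (0 : ℝ) 1 :=
  ⟨by linarith [hx.2], by linarith [hx.1]⟩

lemma BddContinuousOn.reflect {g : ℝ → ℝ} (hg : BddContinuousOn g (Ioo 0 1)) :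
    BddContinuousOn (fun x => g (1 - x)) (Ioo 0 1) :=
  ⟨hg.1.comp (by fun_prop) fun _ => one_sub_mem_Ioo,
    hg.2.imp fun _ hB x hx => hB (1 - x) (one_sub_mem_Ioo hx)⟩

lemma DoublingWeight.reflect {m : ℕ} {ω : ℝ → ℝ} (hω : DoublingWeight m ω) :
    DoublingWeight m (fun x => ω (1 - x)) where
  bddContinuousOn := hω.bddContinuousOn.reflect
  pos x hx := hω.pos _ (one_sub_mem_Ioo hx)
  le_right s t hs hst ht := hω.le_left _ _ (by linarith) (by linarith) (by linarith)
  le_left s t hs hst ht := by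
    simpa only [sub_sub_cancel] using
      hω.le_right (1 - t) (1 - s) (by linarith) (by linarith) (by linarith)

variable {m : ℕ} {ω v U : ℝ → ℝ} {μ : ℝ}

lemma IsFluxSolution.integral_reflect (hω : DoublingWeight m ω) (h : IsFluxSolution ω μ v U)
    {x : ℝ} (hx : x ∈ Icc (0 : ℝ) 1) :
    ∫ t in 0..x, ω (1 - t) * -v (1 - t) = ∫ t in 0..1 - x, ω t * v t := by
  have hωv := hω.bddContinuousOn.mul h.bddContinuousOn
  have hx' : 1 - x ∈ Icc (0 : ℝ) 1 := ⟨by linarith [hx.2], by linarith [hx.1]⟩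
  have hsplit := intervalIntegral.integral_add_adjacent_intervals
    (hωv.intervalIntegrable (left_mem_Icc.2 zero_le_one) hx')
    (hωv.intervalIntegrable hx' (right_mem_Icc.2 zero_le_one))
  have hsub := intervalIntegral.integral_comp_sub_left (a := 0) (b := x) (fun t => ω t * v t) 1
  simp only [mul_neg, intervalIntegral.integral_neg]
  rw [hsub, sub_zero]
  linarith [h.integral_eq_zero]

lemma IsFluxSolution.reflect (hω : DoublingWeight m ω) (h : IsFluxSolution ω μ v U) :
    IsFluxSolution (fun x => ω (1 - x)) μ (fun x => -v (1 - x)) (fun x => -U (1 - x)) where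
  bddContinuousOn := by
    simpa only [neg_one_mul] using (BddContinuousOn.const (-1)).mul h.bddContinuousOn.reflect
  continuousOn := (h.continuousOn.comp (by fun_prop) fun x hx =>
    ⟨by linarith [hx.2], by linarith [hx.1]⟩).neg
  hasDerivAt x hx := by
    rw [h.integral_reflect hω (Ioo_subset_Icc_self hx)]
    simpa only [neg_neg] using
      (h.hasDerivAt (1 - x) (one_sub_mem_Ioo hx)).comp_const_sub 1 x |>.fun_neg
  integral_eq_zero := by
    simpa using h.integral_reflect hω (right_mem_Icc.2 zero_le_one)

end Reflection

namespace IsFluxSolution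

variable {m : ℕ} {ω v U φ : ℝ → ℝ} {lam μ η b : ℝ}

/-- The Wronskian `ω (φ U' - φ' (U + η))` vanishes at `0` and is nondecreasing, since
`lam v ≤ μ (U + η)`. -/
lemma wronskian_le (hω : DoublingWeight m ω) (hv : IsFluxSolution ω lam v U)
    (hφ : IsFluxSolution ω μ φ φ) (hlam : lam ≤ μ) (hμ : 0 ≤ μ) (hb : b ∈ Ioo (0 : ℝ) 1)
    (hvU : ∀ x ∈ Ioo 0 b, |v x - U x| ≤ η) (hv0 : ∀ x ∈ Ioo 0 b, 0 ≤ v x)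
    (hφ0 : ∀ x ∈ Ioo 0 b, 0 ≤ φ x) :
    lam * (∫ t in 0..b, ω t * v t) * φ b ≤ μ * (∫ t in 0..b, ω t * φ t) * (U b + η) := by
  have h0 : (0 : ℝ) ∈ Icc (0 : ℝ) 1 := left_mem_Icc.2 zero_le_one
  have hωv := hω.bddContinuousOn.mul hv.bddContinuousOn
  have hωφ := hω.bddContinuousOn.mul hφ.bddContinuousOn
  set N := fun x => ∫ t in 0..x, ω t * v t
  set G := fun x => ∫ t in 0..x, ω t * φ t
  set V := fun x => μ * G x * (U x + η) - lam * N x * φ x with hV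
  have hsub : Icc 0 b ⊆ Icc 0 1 := Icc_subset_Icc_right hb.2.le
  have hVc : ContinuousOn V (Icc 0 b) := ContinuousOn.mono
    (((continuousOn_const.mul (hωφ.continuousOn_integral h0)).mul
      (hv.continuousOn.add continuousOn_const)).sub
      ((continuousOn_const.mul (hωv.continuousOn_integral h0)).mul hφ.continuousOn)) hsub
  have hVd : ∀ x ∈ Ioo 0 b,
      HasDerivAt V (ω x * φ x * ((μ - lam) * v x + μ * (U x + η - v x))) x := fun x hx => by
    have hx1 : x ∈ Ioo (0 : ℝ) 1 := ⟨hx.1, hx.2.trans hb.2⟩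
    have hωx := (hω.pos x hx1).ne'
    refine HasDerivAt.congr_deriv ((((hωφ.hasDerivAt_integral h0 hx1).const_mul μ).mul
      ((hv.hasDerivAt x hx1).add_const η)).sub
      (((hωv.hasDerivAt_integral h0 hx1).const_mul lam).mul (hφ.hasDerivAt x hx1))) ?_
    field_simp
    ring
  have hmono : MonotoneOn V (Icc 0 b) := by
    refine monotoneOn_of_deriv_nonneg (convex_Icc 0 b) hVc ?_ fun x hx => ?_ <;>
      rw [interior_Icc] at *
    · exact fun x hx => (hVd x hx).differentiableAt.differentiableWithinAt
    · rw [(hVd x hx).deriv]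
      have hωx := hω.pos x ⟨hx.1, hx.2.trans hb.2⟩
      have h1 := mul_nonneg (sub_nonneg.2 hlam) (hv0 x hx)
      have h2 := mul_nonneg hμ (by linarith [(abs_le.1 (hvU x hx)).2] : 0 ≤ U x + η - v x)
      exact mul_nonneg (mul_nonneg hωx.le (hφ0 x hx)) (add_nonneg h1 h2)
  have := hmono (left_mem_Icc.2 hb.1.le) (right_mem_Icc.2 hb.1.le) hb.1.le
  simp only [hV, N, G, intervalIntegral.integral_same] at this
  linarith

/-- The flux `-ω φ' = μ ∫₀ˣ ω φ` increases up to the zero `s` of `φ`. -/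
lemma sub_mul_integral_le {s M : ℝ} (hω : DoublingWeight m ω) (hφ : IsFluxSolution ω μ φ φ)
    (hμ : 0 ≤ μ) (hb : 0 ≤ b) (hbs : b < s) (hs : s < 1) (hφs : φ s = 0)
    (hφ0 : ∀ x ∈ Ioo 0 s, 0 ≤ φ x) (hM : ∀ x ∈ Ioo b s, ω x ≤ M) :
    (s - b) * (μ * ∫ t in 0..b, ω t * φ t) ≤ M * φ b := by
  have hωφ := hω.bddContinuousOn.mul hφ.bddContinuousOn
  obtain ⟨ξ, hξ, hslope⟩ := exists_hasDerivAt_eq_slope φ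
    (fun x => -(μ * ∫ t in 0..x, ω t * φ t) / ω x) hbs
    (hφ.continuousOn.mono (Icc_subset_Icc hb hs.le))
    fun x hx => hφ.hasDerivAt x ⟨hb.trans_lt hx.1, hx.2.trans hs⟩
  have hξ1 : ξ ∈ Ioo (0 : ℝ) 1 := ⟨hb.trans_lt hξ.1, hξ.2.trans hs⟩
  have hb1 : b ∈ Icc (0 : ℝ) 1 := ⟨hb, (hbs.trans hs).le⟩
  have hnonneg : ∀ x ∈ Ioo 0 s, 0 ≤ ω x * φ x := fun x hx =>
    mul_nonneg (hω.pos x ⟨hx.1, hx.2.trans hs⟩).le (hφ0 x hx)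
  have hint : ∀ x y, 0 ≤ x → x ≤ y → y ≤ s → 0 ≤ ∫ t in x..y, ω t * φ t := fun x y hx hxy hy => by
    simpa using (BddContinuousOn.const 0).integral_mono hωφ hx hxy (hy.trans hs.le)
      fun t ht => hnonneg t ⟨hx.trans_lt ht.1, ht.2.trans_le hy⟩
  have hG : ∫ t in 0..b, ω t * φ t ≤ ∫ t in 0..ξ, ω t * φ t := by
    rw [← intervalIntegral.integral_add_adjacent_intervals
      (hωφ.intervalIntegrable (left_mem_Icc.2 zero_le_one) hb1)
      (hωφ.intervalIntegrable hb1 (Ioo_subset_Icc_self hξ1))]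
    linarith [hint b ξ hb hξ.1.le hξ.2.le]
  have hωξ := hω.pos ξ hξ1
  have hsb : 0 < s - b := sub_pos.2 hbs
  have hflux : (s - b) * (μ * ∫ t in 0..ξ, ω t * φ t) = ω ξ * φ b := by
    rw [hφs] at hslope
    field_simp at hslope
    linarith
  have hφb : 0 ≤ φ b := by
    have := mul_nonneg hsb.le (mul_nonneg hμ (hint 0 ξ le_rfl hξ1.1.le hξ.2.le))
    rw [hflux] at this
    exact nonneg_of_mul_nonneg_right this hωξ
  calc (s - b) * (μ * ∫ t in 0..b, ω t * φ t)
      ≤ (s - b) * (μ * ∫ t in 0..ξ, ω t * φ t) := by gcongr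
    _ = ω ξ * φ b := hflux
    _ ≤ M * φ b := by gcongr; exact hM ξ hξ

lemma mul_integral_mul_sub_le {s M : ℝ} (hω : DoublingWeight m ω) (hv : IsFluxSolution ω lam v U)
    (hφ : IsFluxSolution ω μ φ φ) (hlam0 : 0 ≤ lam) (hlam : lam ≤ μ) (hμ : 0 < μ)
    (hb : 0 < b) (hbs : b < s) (hs : s < 1) (hφs : φ s = 0) (hφ0 : ∀ x ∈ Ioo 0 s, 0 < φ x)
    (hM : ∀ x ∈ Ioo b s, ω x ≤ M) (hvU : ∀ x ∈ Ioo 0 b, |v x - U x| ≤ η)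
    (hv0 : ∀ x ∈ Ioo 0 b, 0 ≤ v x) :
    lam * (∫ t in 0..b, ω t * v t) * (s - b) ≤ M * (U b + η) := by
  have hωv := hω.bddContinuousOn.mul hv.bddContinuousOn
  have hωφ := hω.bddContinuousOn.mul hφ.bddContinuousOn
  have hb1 : b ∈ Ioo (0 : ℝ) 1 := ⟨hb, hbs.trans hs⟩
  have hN : 0 ≤ ∫ t in 0..b, ω t * v t := by
    simpa using (BddContinuousOn.const 0).integral_mono hωv le_rfl hb.le hb1.2.le
      fun t ht => mul_nonneg (hω.pos t ⟨ht.1, ht.2.trans hb1.2⟩).le (hv0 t ht)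
  have hG : 0 < μ * ∫ t in 0..b, ω t * φ t := mul_pos hμ <|
    hωφ.integral_pos le_rfl hb hb1.2.le fun t ht =>
      mul_pos (hω.pos t ⟨ht.1, ht.2.trans hb1.2⟩) (hφ0 t ⟨ht.1, ht.2.trans hbs⟩)
  have hM0 : 0 ≤ M :=
    let ⟨t, ht⟩ := nonempty_Ioo.2 hbs
    (hω.pos t ⟨hb.trans ht.1, ht.2.trans hs⟩).le.trans (hM t ht)
  have hdec := hφ.sub_mul_integral_le hω hμ.le hb.le hbs hs hφs (fun x hx => (hφ0 x hx).le) hM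
  have hwr := hv.wronskian_le hω hφ hlam hμ.le hb1 hvU hv0
    fun x hx => (hφ0 x ⟨hx.1, hx.2.trans hbs⟩).le
  refine le_of_mul_le_mul_right ?_ hG
  calc lam * (∫ t in 0..b, ω t * v t) * (s - b) * (μ * ∫ t in 0..b, ω t * φ t)
      = lam * (∫ t in 0..b, ω t * v t) * ((s - b) * (μ * ∫ t in 0..b, ω t * φ t)) := by ring
    _ ≤ lam * (∫ t in 0..b, ω t * v t) * (M * φ b) := by gcongr
    _ = M * (lam * (∫ t in 0..b, ω t * v t) * φ b) := by ring
    _ ≤ M * (μ * (∫ t in 0..b, ω t * φ t) * (U b + η)) := by gcongr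
    _ = M * (U b + η) * (μ * ∫ t in 0..b, ω t * φ t) := by ring

end IsFluxSolution

namespace DoublingWeight

variable {m : ℕ} {ω : ℝ → ℝ} {δ x : ℝ}

lemma le_mul_integral (hω : DoublingWeight m ω) (hδ : 0 < δ) (hδx : δ ≤ x) (hx : x < 1) :
    ω x ≤ 2 / δ * (4 / δ) ^ m * ∫ t in 0..δ, ω t := by
  have hδ1 : δ ≤ 1 := hδx.trans hx.le
  have hωb := hω.bddContinuousOn
  have h0 : (0 : ℝ) ∈ Icc (0 : ℝ) 1 := left_mem_Icc.2 zero_le_one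
  have hδ2 : δ / 2 ∈ Icc (0 : ℝ) 1 := ⟨by linarith, by linarith⟩
  have hle : ∀ t ∈ Ioo (δ / 2) δ, ω x ≤ (4 / δ) ^ m * ω t := fun t ht => by
    have ht0 : 0 < t := by linarith [ht.1]
    have hωt := hω.pos t ⟨ht0, ht.2.trans_le hδ1⟩
    have h2t : 2 / t ≤ 4 / δ := by rw [div_le_div_iff₀ ht0 hδ]; linarith [ht.1]
    exact (hω.le_left t x ht0 (ht.2.trans_le hδx) hx).trans (by gcongr)
  have hint := (BddContinuousOn.const (ω x)).integral_mono
    ((BddContinuousOn.const ((4 / δ) ^ m)).mul hωb) hδ2.1 (by linarith) hδ1 hle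
  have hhead := hωb.integral_pos le_rfl (half_pos hδ) hδ2.2 fun t ht =>
    hω.pos t ⟨ht.1, ht.2.trans_le hδ2.2⟩
  rw [intervalIntegral.integral_const, intervalIntegral.integral_const_mul, smul_eq_mul] at hint
  have hsplit := intervalIntegral.integral_add_adjacent_intervals
    (hωb.intervalIntegrable h0 hδ2) (hωb.intervalIntegrable hδ2 ⟨hδ.le, hδ1⟩)
  calc ω x = 2 / δ * ((δ - δ / 2) * ω x) := by field_simp; ring
    _ ≤ 2 / δ * ((4 / δ) ^ m * ∫ t in δ / 2..δ, ω t) := by gcongr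
    _ ≤ 2 / δ * ((4 / δ) ^ m * ∫ t in 0..δ, ω t) := by gcongr; linarith
    _ = _ := by ring

lemma integral_le (hω : DoublingWeight m ω) (hx : 0 < x) (hx2 : x ≤ 1 / 2) :
    ∫ t in 0..x, ω t ≤ 4 ^ m * ω x := by
  have hωx := hω.pos x ⟨hx, by linarith⟩
  have hle : ∀ t ∈ Ioo 0 x, ω t ≤ 4 ^ m * ω x := fun t ht => by
    have h4 : 2 / (1 - x) ≤ 4 := by rw [div_le_iff₀ (by linarith)]; linarith
    have h0 : 0 ≤ 2 / (1 - x) := div_nonneg zero_le_two (by linarith)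
    exact (hω.le_right t x ht.1 ht.2 (by linarith)).trans (by gcongr)
  have hint := hω.bddContinuousOn.integral_mono (.const (4 ^ m * ω x)) le_rfl hx.le
    (by linarith) hle
  rw [intervalIntegral.integral_const, sub_zero, smul_eq_mul] at hint
  exact hint.trans (mul_le_of_le_one_left (by positivity) (by linarith))

end DoublingWeight

namespace IsFluxSolution

variable {m : ℕ} {ω v U φ : ℝ → ℝ} {lam μ η c K x : ℝ}

lemma abs_integral_le_of_le_half (hω : DoublingWeight m ω) (hv : IsFluxSolution ω lam v U)
    (hK : ∀ t ∈ Ioo (0 : ℝ) 1, |v t| ≤ K) (hx : 0 < x) (hx2 : x ≤ 1 / 2) :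
    |∫ t in 0..x, ω t * v t| ≤ K * (4 ^ m * ω x) := by
  have hx1 : x ∈ Ioo (0 : ℝ) 1 := ⟨hx, by linarith⟩
  have hωv := hω.bddContinuousOn.mul hv.bddContinuousOn
  have hle : ∀ t ∈ Ioo 0 x, |ω t * v t| ≤ K * ω t := fun t ht => by
    have ht1 : t ∈ Ioo (0 : ℝ) 1 := ⟨ht.1, ht.2.trans hx1.2⟩
    rw [abs_mul, abs_of_pos (hω.pos t ht1), mul_comm]
    exact mul_le_mul_of_nonneg_right (hK t ht1) (hω.pos t ht1).le
  have habs : BddContinuousOn (fun t => |ω t * v t|) (Ioo 0 1) :=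
    ⟨hωv.1.abs, by simpa only [abs_abs] using hωv.2⟩
  calc |∫ t in 0..x, ω t * v t| ≤ ∫ t in 0..x, |ω t * v t| :=
        intervalIntegral.abs_integral_le_integral_abs hx.le
    _ ≤ ∫ t in 0..x, K * ω t :=
        habs.integral_mono ((BddContinuousOn.const K).mul hω.bddContinuousOn)
          le_rfl hx.le hx1.2.le hle
    _ = K * ∫ t in 0..x, ω t := intervalIntegral.integral_const_mul _ _
    _ ≤ K * (4 ^ m * ω x) :=
        mul_le_mul_of_nonneg_left (hω.integral_le hx hx2) ((abs_nonneg _).trans (hK x hx1))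

lemma abs_integral_le (hω : DoublingWeight m ω) (hv : IsFluxSolution ω lam v U)
    (hK : ∀ t ∈ Ioo (0 : ℝ) 1, |v t| ≤ K) (hx : x ∈ Ioo (0 : ℝ) 1) :
    |∫ t in 0..x, ω t * v t| ≤ K * (4 ^ m * ω x) := by
  rcases le_total x (1 / 2) with hx2 | hx2
  · exact hv.abs_integral_le_of_le_half hω hK hx.1 hx2
  · have hrefl := hv.integral_reflect hω (Ioo_subset_Icc_self (one_sub_mem_Ioo hx))
    simpa only [hrefl, sub_sub_cancel] using
      (hv.reflect hω).abs_integral_le_of_le_half hω.reflect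
        (fun t ht => by simpa only [abs_neg] using hK _ (one_sub_mem_Ioo ht))
        (by linarith [hx.2] : 0 < 1 - x) (by linarith)

lemma two_mul_le_mul_eigenvalue (hω : DoublingWeight m ω) (hv : IsFluxSolution ω lam v U)
    (hlam : 0 ≤ lam) (hK : ∀ t ∈ Ioo (0 : ℝ) 1, |v t| ≤ K) (h0 : c ≤ U 0) (h1 : U 1 ≤ -c) :
    2 * c ≤ lam * (K * 4 ^ m) := by
  obtain ⟨ξ, hξ, hslope⟩ := exists_hasDerivAt_eq_slope U _ zero_lt_one hv.continuousOn
    hv.hasDerivAt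
  have hωξ := hω.pos ξ hξ
  have hflux : lam * ∫ t in 0..ξ, ω t * v t = ω ξ * (U 0 - U 1) := by
    field_simp at hslope
    linarith
  refine le_of_mul_le_mul_left ?_ hωξ
  calc ω ξ * (2 * c) ≤ ω ξ * (U 0 - U 1) := by gcongr; linarith
    _ = lam * ∫ t in 0..ξ, ω t * v t := hflux.symm
    _ ≤ lam * (K * (4 ^ m * ω ξ)) := by
        gcongr
        exact (le_abs_self _).trans (hv.abs_integral_le hω hK hξ)
    _ = ω ξ * (lam * (K * 4 ^ m)) := by ring

end IsFluxSolution

/-- `U` is `K`-Lipschitz on `[0, 1]`, decreases from at least `c` to at most `-c`, and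
approximates `v`, itself bounded by `K`, within `η ≤ c / 4` on `(0, 1)`. -/
structure IsProfile (v U : ℝ → ℝ) (K c η : ℝ) : Prop where
  abs_le_bound : ∀ x ∈ Ioo (0 : ℝ) 1, |v x| ≤ K
  abs_sub_le : ∀ x ∈ Ioo (0 : ℝ) 1, |v x - U x| ≤ η
  lipschitz : ∀ x ∈ Icc (0 : ℝ) 1, ∀ y ∈ Icc (0 : ℝ) 1, |U x - U y| ≤ K * |x - y|
  le_zero : c ≤ U 0
  one_le : U 1 ≤ -c
  pos : 0 < c
  le_div_four : η ≤ c / 4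

/-- The first Neumann eigenfunction on `(0, 1)` with weight `ω`: a solution with eigenvalue `μ`
that is positive on `[0, s)` and negative on `(s, 1)`. -/
structure IsFirstEigenfunction (ω : ℝ → ℝ) (μ : ℝ) (φ : ℝ → ℝ) (s : ℝ) : Prop where
  isFluxSolution : IsFluxSolution ω μ φ φ
  mem_Ioo : s ∈ Ioo (0 : ℝ) 1
  eq_zero : φ s = 0
  pos : ∀ x ∈ Ioo 0 s, 0 < φ x
  neg : ∀ x ∈ Ioo s 1, φ x < 0

namespace IsProfile

variable {m : ℕ} {ω v U φ : ℝ → ℝ} {lam μ η c K s x b : ℝ}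

lemma reflect (h : IsProfile v U K c η) :
    IsProfile (fun x => -v (1 - x)) (fun x => -U (1 - x)) K c η where
  abs_le_bound x hx := by simpa only [abs_neg] using h.abs_le_bound _ (one_sub_mem_Ioo hx)
  abs_sub_le x hx := by
    simpa only [neg_sub_neg, abs_sub_comm] using h.abs_sub_le _ (one_sub_mem_Ioo hx)
  lipschitz x hx y hy := by
    have := h.lipschitz (1 - y) ⟨by linarith [hy.2], by linarith [hy.1]⟩
      (1 - x) ⟨by linarith [hx.2], by linarith [hx.1]⟩
    rwa [← neg_sub_neg, sub_sub_sub_cancel_left] at this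
  le_zero := by simpa using neg_le_neg h.one_le
  one_le := by simpa using neg_le_neg h.le_zero
  pos := h.pos
  le_div_four := h.le_div_four

lemma nonneg (h : IsProfile v U K c η) : 0 ≤ η :=
  (abs_nonneg _).trans (h.abs_sub_le (1 / 2) ⟨by norm_num, by norm_num⟩)

lemma two_mul_le (h : IsProfile v U K c η) : 2 * c ≤ K := by
  have := (le_abs_self _).trans
    (h.lipschitz 0 (left_mem_Icc.2 zero_le_one) 1 (right_mem_Icc.2 zero_le_one))
  norm_num at this
  linarith [h.le_zero, h.one_le]

lemma half_le (h : IsProfile v U K c η) (hx : 0 < x) (hxK : K * x ≤ c / 4) (hx1 : x < 1) :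
    c / 2 ≤ v x := by
  have hU := (le_abs_self _).trans
    (h.lipschitz 0 (left_mem_Icc.2 zero_le_one) x ⟨hx.le, hx1.le⟩)
  rw [zero_sub, abs_neg, abs_of_pos hx] at hU
  linarith [(abs_le.1 (h.abs_sub_le x ⟨hx, hx1⟩)).1, h.le_zero, h.le_div_four]

lemma mul_integral_le (h : IsProfile v U K c η) (hω : DoublingWeight m ω)
    (hv : BddContinuousOn v (Ioo 0 1)) (hδb : c / (4 * K) ≤ b) (hb : b < 1)
    (hv0 : ∀ x ∈ Ioo 0 b, 0 ≤ v x) :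
    c / 2 * ∫ t in 0..c / (4 * K), ω t ≤ ∫ t in 0..b, ω t * v t := by
  have hc := h.pos
  have hK : 0 < K := by linarith [h.two_mul_le]
  have hωv := hω.bddContinuousOn.mul hv
  set δ := c / (4 * K) with hδ
  have hδ0 : 0 < δ := by positivity
  have hδ1 : δ ∈ Icc (0 : ℝ) 1 := ⟨hδ0.le, hδb.trans hb.le⟩
  rw [← intervalIntegral.integral_add_adjacent_intervals
    (hωv.intervalIntegrable (left_mem_Icc.2 zero_le_one) hδ1)
    (hωv.intervalIntegrable hδ1 ⟨hδ0.le.trans hδb, hb.le⟩),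
    ← intervalIntegral.integral_const_mul]
  refine le_add_of_le_of_nonneg (((BddContinuousOn.const (c / 2)).mul
    hω.bddContinuousOn).integral_mono hωv le_rfl hδ0.le hδ1.2 fun t ht => ?_) ?_
  · have htK : K * t ≤ c / 4 := by
      have := mul_le_mul_of_nonneg_left ht.2.le hK.le
      rwa [hδ, show K * (c / (4 * K)) = c / 4 by field_simp] at this
    rw [mul_comm]
    exact mul_le_mul_of_nonneg_left (h.half_le ht.1 htK (ht.2.trans_le hδ1.2))
      (hω.pos t ⟨ht.1, ht.2.trans_le hδ1.2⟩).le
  · simpa using (BddContinuousOn.const 0).integral_mono hωv hδ0.le hδb hb.le fun t ht =>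
      mul_nonneg (hω.pos t ⟨hδ0.trans ht.1, ht.2.trans hb⟩).le (hv0 t ⟨hδ0.trans ht.1, ht.2⟩)

lemma sub_le_of_nonneg (h : IsProfile v U K c η) (hω : DoublingWeight m ω)
    (hv : IsFluxSolution ω lam v U) (hφ : IsFirstEigenfunction ω μ φ s) (hlam0 : 0 < lam)
    (hlam : lam ≤ μ) (hδb : c / (4 * K) ≤ b) (hbs : b < s) (hv0 : ∀ x ∈ Ioo 0 b, 0 ≤ v x)
    (hvb : v b ≤ η) : s - b ≤ 24 * K ^ 2 / c ^ 3 * (64 * K / c) ^ m * η := by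
  have hc := h.pos
  have hK : 0 < K := by linarith [h.two_mul_le]
  have hs := hφ.mem_Ioo
  have hδ0 : 0 < c / (4 * K) := by positivity
  have hb1 : b ∈ Ioo (0 : ℝ) 1 := ⟨hδ0.trans_le hδb, hbs.trans hs.2⟩
  have hN := h.mul_integral_le hω hv.bddContinuousOn hδb hb1.2 hv0
  have hmain := hv.mul_integral_mul_sub_le hω hφ.isFluxSolution hlam0.le hlam
    (hlam0.trans_le hlam) hb1.1 hbs hs.2 hφ.eq_zero hφ.pos
    (fun x hx => hω.le_mul_integral hδ0 (hδb.trans hx.1.le) (hx.2.trans hs.2))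
    (fun x hx => h.abs_sub_le x ⟨hx.1, hx.2.trans hb1.2⟩) hv0
  have hlamK := hv.two_mul_le_mul_eigenvalue hω hlam0.le h.abs_le_bound h.le_zero h.one_le
  have hUb : U b + η ≤ 3 * η := by linarith [(abs_le.1 (h.abs_sub_le b hb1)).1]
  have hJ : 0 < ∫ t in 0..c / (4 * K), ω t :=
    hω.bddContinuousOn.integral_pos le_rfl hδ0 (hδb.trans hb1.2.le) fun t ht =>
      hω.pos t ⟨ht.1, ht.2.trans_le (hδb.trans hb1.2.le)⟩
  set J := ∫ t in 0..c / (4 * K), ω t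
  have : 0 < s - b := sub_pos.2 hbs
  refine le_of_mul_le_mul_left ?_ (by positivity : 0 < c ^ 2 * J)
  calc c ^ 2 * J * (s - b) = 2 * c * (c / 2 * J) * (s - b) := by ring
    _ ≤ lam * (K * 4 ^ m) * (∫ t in 0..b, ω t * v t) * (s - b) := by gcongr
    _ = K * 4 ^ m * (lam * (∫ t in 0..b, ω t * v t) * (s - b)) := by ring
    _ ≤ K * 4 ^ m * (2 / (c / (4 * K)) * (4 / (c / (4 * K))) ^ m * J * (3 * η)) := by
        refine mul_le_mul_of_nonneg_left (hmain.trans ?_) (by positivity)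
        gcongr
    _ = c ^ 2 * J * (24 * K ^ 2 / c ^ 3 * (4 * (4 / (c / (4 * K)))) ^ m * η) := by
        rw [mul_pow]
        field_simp
        ring
    _ = c ^ 2 * J * (24 * K ^ 2 / c ^ 3 * (64 * K / c) ^ m * η) := by
        congr 4
        field_simp
        ring

/-- The comparison is made at the first point `b` where `v ≤ η`, before which `v` is positive. -/
lemma sub_le (h : IsProfile v U K c η) (hω : DoublingWeight m ω)
    (hv : IsFluxSolution ω lam v U) (hφ : IsFirstEigenfunction ω μ φ s) (hlam0 : 0 < lam)
    (hlam : lam ≤ μ) (hx : 0 < x) (hxs : x < s) (hvx : v x ≤ η) :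
    s - x ≤ 24 * K ^ 2 / c ^ 3 * (64 * K / c) ^ m * η := by
  have hc := h.pos
  have hK : 0 < K := by linarith [h.two_mul_le]
  have hx1 : x < 1 := hxs.trans hφ.mem_Ioo.2
  have hlarge : ∀ t, 0 < t → t ≤ c / (4 * K) → t < 1 → c / 2 ≤ v t := fun t ht htδ ht1 => by
    refine h.half_le ht ?_ ht1
    calc K * t ≤ K * (c / (4 * K)) := by gcongr
      _ = c / 4 := by field_simp
  have hηc : η < c / 2 := by linarith [h.le_div_four]
  have hδx : c / (4 * K) ≤ x := by
    by_contra! hlt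
    linarith [hlarge x hx hlt.le hx1]
  have hδ0 : 0 < c / (4 * K) := by positivity
  have hcont : ContinuousOn v (Icc (c / (4 * K)) x) := hv.bddContinuousOn.1.mono fun t ht =>
    ⟨hδ0.trans_le ht.1, ht.2.trans_lt hx1⟩
  obtain ⟨b, ⟨hb, hvb⟩, hmin⟩ :=
    (hcont.lowerSemicontinuousOn.isCompact_inter_preimage_Iic isCompact_Icc η).exists_isLeast
      ⟨x, right_mem_Icc.2 hδx, hvx⟩
  have hv0 : ∀ t ∈ Ioo 0 b, 0 ≤ v t := fun t ht => by
    have htx : t < x := ht.2.trans_le hb.2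
    rcases le_total t (c / (4 * K)) with htδ | htδ
    · linarith [hlarge t ht.1 htδ (htx.trans hx1)]
    · by_contra! hneg
      exact ht.2.not_ge (hmin ⟨⟨htδ, htx.le⟩, hneg.le.trans h.nonneg⟩)
  have := h.sub_le_of_nonneg hω hv hφ hlam0 hlam hb.1 (hb.2.trans_lt hxs) hv0 hvb
  linarith [hb.2]

end IsProfile

lemma IsFirstEigenfunction.reflect {m : ℕ} {ω φ : ℝ → ℝ} {μ s : ℝ} (hω : DoublingWeight m ω)
    (h : IsFirstEigenfunction ω μ φ s) :
    IsFirstEigenfunction (fun x => ω (1 - x)) μ (fun x => -φ (1 - x)) (1 - s) where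
  isFluxSolution := h.isFluxSolution.reflect hω
  mem_Ioo := one_sub_mem_Ioo h.mem_Ioo
  eq_zero := by simp [h.eq_zero]
  pos x hx := neg_pos.2 (h.neg _ ⟨by linarith [hx.2], by linarith [hx.1]⟩)
  neg x hx := neg_neg_iff_pos.2 (h.pos _ ⟨by linarith [hx.2], by linarith [hx.1]⟩)

theorem IsProfile.abs_sub_zero_le {m : ℕ} {ω v U φ : ℝ → ℝ} {lam μ η c K s x : ℝ}
    (h : IsProfile v U K c η) (hω : DoublingWeight m ω) (hv : IsFluxSolution ω lam v U)
    (hφ : IsFirstEigenfunction ω μ φ s) (hlam0 : 0 < lam) (hlam : lam ≤ μ)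
    (hx : x ∈ Ioo (0 : ℝ) 1) (hvx : |v x| ≤ η) :
    |x - s| ≤ 24 * K ^ 2 / c ^ 3 * (64 * K / c) ^ m * η := by
  obtain ⟨hvx1, hvx2⟩ := abs_le.1 hvx
  rcases lt_trichotomy x s with hxs | rfl | hsx
  · rw [abs_sub_comm, abs_of_pos (sub_pos.2 hxs)]
    exact h.sub_le hω hv hφ hlam0 hlam hx.1 hxs hvx2
  · have hc := h.pos
    have hη := h.nonneg
    have hK : 0 < K := by linarith [h.two_mul_le]
    rw [sub_self, abs_zero]
    positivity
  · rw [abs_of_pos (sub_pos.2 hsx), ← sub_sub_sub_cancel_left s x 1]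
    refine h.reflect.sub_le hω.reflect (hv.reflect hω) (hφ.reflect hω) hlam0 hlam
      (one_sub_mem_Ioo hx).1 (by linarith) ?_
    rw [sub_sub_cancel]
    linarith
namespace NeumannSol

variable {m : ℕ} {ω φ φd : ℝ → ℝ} {μ s : ℝ}

lemma continuousOn (h : NeumannSol ω μ φ φd) : ContinuousOn φ (Icc 0 1) :=
  fun x hx => (h.1 x hx).continuousWithinAt

lemma hasDerivAt (h : NeumannSol ω μ φ φd) {x : ℝ} (hx : x ∈ Ioo (0 : ℝ) 1) :
    HasDerivAt φ (φd x) x :=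
  (h.1 x (Ioo_subset_Icc_self hx)).hasDerivAt (Icc_mem_nhds hx.1 hx.2)

lemma hasDerivAt_flux (h : NeumannSol ω μ φ φd) {x : ℝ} (hx : x ∈ Ioo (0 : ℝ) 1) :
    HasDerivAt (fun t => ω t * φd t) (-(μ * ω x * φ x)) x :=
  h.2.2.2.2.2 x hx

lemma bddContinuousOn (h : NeumannSol ω μ φ φd) : BddContinuousOn φ (Ioo 0 1) :=
  (BddContinuousOn.of_isCompact isCompact_Icc h.continuousOn).mono Ioo_subset_Icc_self

lemma bddContinuousOn_deriv (h : NeumannSol ω μ φ φd) : BddContinuousOn φd (Ioo 0 1) :=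
  (BddContinuousOn.of_isCompact isCompact_Icc h.2.1).mono Ioo_subset_Icc_self

lemma tendsto_flux (hω : DoublingWeight m ω) (h : NeumannSol ω μ φ φd) {x : ℝ}
    (hx : x ∈ Icc (0 : ℝ) 1) (hφd : φd x = 0) :
    Tendsto (fun t => ω t * φd t) (𝓝[Ioo 0 1] x) (𝓝 0) := by
  obtain ⟨B, hB⟩ := hω.bddContinuousOn.2
  have hd := (h.2.1 x hx).mono_left (nhdsWithin_mono x Ioo_subset_Icc_self)
  rw [hφd] at hd
  exact bdd_le_mul_tendsto_zero' B (eventually_mem_nhdsWithin.mono hB) hd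

lemma integral_eq (hω : DoublingWeight m ω) (h : NeumannSol ω μ φ φd) {x l : ℝ} (hx0 : 0 < x)
    (hx1 : x ≤ 1) (hl : Tendsto (fun t => ω t * φd t) (𝓝[<] x) (𝓝 l)) :
    -(μ * ∫ t in 0..x, ω t * φ t) = l := by
  have hωφ := hω.bddContinuousOn.mul h.bddContinuousOn
  have h0 := h.tendsto_flux hω (left_mem_Icc.2 zero_le_one) h.2.2.1
  rw [nhdsWithin_Ioo_eq_nhdsGT one_pos] at h0
  have hint := intervalIntegral.integral_eq_sub_of_hasDerivAt_of_tendsto hx0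
    (fun t ht => h.hasDerivAt_flux ⟨ht.1, ht.2.trans_le hx1⟩)
    (((((BddContinuousOn.const (-μ)).mul hωφ).intervalIntegrable (left_mem_Icc.2 zero_le_one)
      ⟨hx0.le, hx1⟩)).congr fun t _ => by ring) h0 hl
  rw [sub_zero] at hint
  rw [← hint, ← neg_mul, ← intervalIntegral.integral_const_mul]
  congr 1 with t
  ring

lemma isFluxSolution (hω : DoublingWeight m ω) (h : NeumannSol ω μ φ φd) (hμ : μ ≠ 0) :
    IsFluxSolution ω μ φ φ where
  bddContinuousOn := h.bddContinuousOn
  continuousOn := h.continuousOn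
  hasDerivAt x hx := by
    rw [h.integral_eq hω hx.1 hx.2.le ((h.hasDerivAt_flux hx).continuousAt.tendsto.mono_left
      nhdsWithin_le_nhds), mul_div_cancel_left₀ _ (hω.pos x hx).ne']
    exact h.hasDerivAt hx
  integral_eq_zero := by
    have h1 := h.tendsto_flux hω (right_mem_Icc.2 zero_le_one) h.2.2.2.1
    rw [nhdsWithin_Ioo_eq_nhdsLT one_pos] at h1
    simpa [hμ] using h.integral_eq hω one_pos le_rfl h1

/-- If `φ` were positive on both sides of its zero, `∫ ω φ = 0` would fail. -/
lemma isFirstEigenfunction (hω : DoublingWeight m ω) (h : NeumannSol ω μ φ φd) (hμ : μ ≠ 0)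
    (hs : s ∈ Ioo (0 : ℝ) 1) (hφs : φ s = 0) (huniq : ∀ t ∈ Ioo (0 : ℝ) 1, φ t = 0 → t = s)
    (hφ0 : 0 < φ 0) : IsFirstEigenfunction ω μ φ s := by
  have hflux := h.isFluxSolution hω hμ
  have hωφ := hω.bddContinuousOn.mul h.bddContinuousOn
  have hpos : ∀ x ∈ Ioo 0 s, 0 < φ x := fun x hx => by
    by_contra! hneg
    obtain ⟨t, ht, hφt⟩ := intermediate_value_Icc' hx.1.le
      (h.continuousOn.mono (Icc_subset_Icc_right (hx.2.trans hs.2).le)) ⟨hneg, hφ0.le⟩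
    have ht0 : t ≠ 0 := fun h0 => hφ0.ne' (h0 ▸ hφt)
    have hts := huniq t ⟨ht.1.lt_of_ne' ht0, ht.2.trans_lt (hx.2.trans hs.2)⟩ hφt
    exact (hts ▸ ht.2).not_gt hx.2
  refine ⟨hflux, hs, hφs, hpos, fun x hx => ?_⟩
  by_contra! hx0
  have hright : ∀ y ∈ Ioo s 1, 0 < φ y := fun y hy => by
    by_contra! hy0
    have hmem : (0 : ℝ) ∈ φ '' uIcc y x := intermediate_value_uIcc
      (h.continuousOn.mono (uIcc_subset_Icc ⟨(hs.1.trans hy.1).le, hy.2.le⟩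
        ⟨(hs.1.trans hx.1).le, hx.2.le⟩)) (Icc_subset_uIcc ⟨hy0, hx0⟩)
    obtain ⟨t, ht, hφt⟩ := hmem
    have htI : t ∈ Ioo s 1 := ordConnected_Ioo.uIcc_subset hy hx ht
    exact htI.1.ne' (huniq t ⟨hs.1.trans htI.1, htI.2⟩ hφt)
  have h1 := hωφ.integral_pos le_rfl hs.1 hs.2.le fun t ht =>
    mul_pos (hω.pos t ⟨ht.1, ht.2.trans hs.2⟩) (hpos t ht)
  have h2 := hωφ.integral_pos hs.1.le hs.2 le_rfl fun t ht =>
    mul_pos (hω.pos t ⟨hs.1.trans ht.1, ht.2⟩) (hright t ht)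
  have hsplit := intervalIntegral.integral_add_adjacent_intervals
    (hωφ.intervalIntegrable (left_mem_Icc.2 zero_le_one) (Ioo_subset_Icc_self hs))
    (hωφ.intervalIntegrable (Ioo_subset_Icc_self hs) (right_mem_Icc.2 zero_le_one))
  rw [hflux.integral_eq_zero] at hsplit
  linarith

lemma energy_eq (hω : DoublingWeight m ω) (h : NeumannSol ω μ φ φd) :
    ∫ t in (0 : ℝ)..1, ω t * φd t ^ 2 = μ * ∫ t in (0 : ℝ)..1, ω t * φ t ^ 2 := by
  have hωb := hω.bddContinuousOn
  have hI0 : (0 : ℝ) ∈ Icc (0 : ℝ) 1 := left_mem_Icc.2 zero_le_one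
  have hI1 : (1 : ℝ) ∈ Icc (0 : ℝ) 1 := right_mem_Icc.2 zero_le_one
  have hint1 := ((BddContinuousOn.const μ).mul
    (hωb.mul h.bddContinuousOn.pow_two)).intervalIntegrable hI0 hI1
  have hint2 := (hωb.mul h.bddContinuousOn_deriv.pow_two).intervalIntegrable hI0 hI1
  have hlim : ∀ x ∈ Icc (0 : ℝ) 1, φd x = 0 →
      Tendsto (fun t => ω t * φd t * φ t) (𝓝[Ioo 0 1] x) (𝓝 0) := fun x hx hφd => by
    simpa only [zero_mul] using (h.tendsto_flux hω hx hφd).mul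
      ((h.continuousOn x hx).mono_left (nhdsWithin_mono x Ioo_subset_Icc_self))
  have h0 := hlim 0 hI0 h.2.2.1
  have h1 := hlim 1 hI1 h.2.2.2.1
  rw [nhdsWithin_Ioo_eq_nhdsGT one_pos] at h0
  rw [nhdsWithin_Ioo_eq_nhdsLT one_pos] at h1
  have hFTC := intervalIntegral.integral_eq_sub_of_hasDerivAt_of_tendsto zero_lt_one
    (f' := fun t => ω t * φd t ^ 2 - μ * (ω t * φ t ^ 2))
    (fun t ht => ((h.hasDerivAt_flux ht).mul (h.hasDerivAt ht)).congr_deriv (by ring))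
    (hint2.sub hint1) h0 h1
  rw [intervalIntegral.integral_sub hint2 hint1, intervalIntegral.integral_const_mul] at hFTC
  linarith

end NeumannSol
/-- The Poincaré inequality with constant `lam` for the weight `ω` on `(0, 1)`, tested on smooth
functions; the term `(∫ ω W)² / ∫ ω` is the contribution of the mean of `W`. -/
def WeightedPoincare (ω : ℝ → ℝ) (lam : ℝ) : Prop :=
  ∀ W : ℝ → ℝ, ContDiff ℝ (⊤ : ℕ∞) W →
    lam * ((∫ t in (0 : ℝ)..1, ω t * W t ^ 2)
      - (∫ t in (0 : ℝ)..1, ω t * W t) ^ 2 / ∫ t in (0 : ℝ)..1, ω t)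
      ≤ ∫ t in (0 : ℝ)..1, ω t * deriv W t ^ 2

lemma contDiff_const_add_integral {g : ℝ → ℝ} (hg : ContDiff ℝ (⊤ : ℕ∞) g) (a k : ℝ) :
    ContDiff ℝ (⊤ : ℕ∞) (fun x => k + ∫ t in a..x, g t) ∧
      deriv (fun x => k + ∫ t in a..x, g t) = g := by
  have hd : ∀ x, HasDerivAt (fun x => k + ∫ t in a..x, g t) (g x) x := fun x =>
    (hg.continuous.integral_hasStrictDerivAt a x).hasDerivAt.const_add k
  have hderiv : deriv (fun x => k + ∫ t in a..x, g t) = g := funext fun x => (hd x).deriv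
  refine ⟨contDiff_infty_iff_deriv.2 ⟨fun x => (hd x).differentiableAt, ?_⟩, hderiv⟩
  rwa [hderiv]

lemma exists_contDiff_near {φ φd : ℝ → ℝ} (hφ : ContinuousOn φ (Icc 0 1))
    (hd : ∀ x ∈ Ioo (0 : ℝ) 1, HasDerivAt φ (φd x) x) (hφd : ContinuousOn φd (Icc 0 1))
    {r : ℝ} (hr : 0 < r) :
    ∃ W : ℝ → ℝ, ContDiff ℝ (⊤ : ℕ∞) W ∧
      ∀ x ∈ Icc (0 : ℝ) 1, |W x - φ x| ≤ r ∧ |deriv W x - φd x| ≤ r := by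
  obtain ⟨P, hP⟩ := exists_polynomial_near_of_continuousOn 0 1 φd hφd r hr
  have hPc : ContDiff ℝ (⊤ : ℕ∞) (fun x => P.eval x) := by
    simpa using P.contDiff_aeval (𝕜 := ℝ) (⊤ : ℕ∞)
  obtain ⟨hW, hWd⟩ := contDiff_const_add_integral hPc 0 (φ 0)
  refine ⟨_, hW, fun x hx => ⟨?_, by rw [hWd]; exact (hP x hx).le⟩⟩
  have hint : IntervalIntegrable φd volume 0 x := by
    refine (hφd.mono ?_).intervalIntegrable
    rw [uIcc_of_le hx.1]
    exact Icc_subset_Icc_right hx.2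
  have hFTC := intervalIntegral.integral_eq_sub_of_hasDerivAt_of_le hx.1
    (hφ.mono (Icc_subset_Icc_right hx.2)) (fun t ht => hd t ⟨ht.1, ht.2.trans_le hx.2⟩) hint
  have hdiff : φ 0 + (∫ t in 0..x, P.eval t) - φ x = ∫ t in 0..x, (P.eval t - φd t) := by
    rw [intervalIntegral.integral_sub (hPc.continuous.intervalIntegrable 0 x) hint, hFTC]
    ring
  rw [hdiff]
  calc |∫ t in 0..x, (P.eval t - φd t)| ≤ r * |x - 0| :=
        intervalIntegral.norm_integral_le_of_norm_le_const (C := r)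
          (f := fun t => P.eval t - φd t) fun t ht => by
          rw [uIoc_of_le hx.1] at ht
          exact (hP t ⟨ht.1.le, ht.2.trans hx.2⟩).le
    _ ≤ r := by
        rw [sub_zero, abs_of_nonneg hx.1]
        exact mul_le_of_le_one_right hr.le hx.2

lemma tendsto_integral_mul_of_bounded {ω g : ℝ → ℝ} {F : ℕ → ℝ → ℝ} {B : ℝ}
    (hω : BddContinuousOn ω (Ioo 0 1)) (hF : ∀ n, Continuous (F n))
    (hB : ∀ n, ∀ t ∈ Icc (0 : ℝ) 1, |F n t| ≤ B)
    (hlim : ∀ t ∈ Icc (0 : ℝ) 1, Tendsto (fun n => F n t) atTop (𝓝 (g t))) :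
    Tendsto (fun n => ∫ t in (0 : ℝ)..1, ω t * F n t) atTop
      (𝓝 (∫ t in (0 : ℝ)..1, ω t * g t)) := by
  obtain ⟨A, hA⟩ := hω.2
  have hIoo : ∀ᵐ t : ℝ, t ∈ uIoc (0 : ℝ) 1 → t ∈ Ioo (0 : ℝ) 1 := by
    filter_upwards [Measure.ae_ne volume (1 : ℝ)] with t ht htI
    rw [uIoc_of_le zero_le_one] at htI
    exact ⟨htI.1, htI.2.lt_of_ne ht⟩
  refine intervalIntegral.tendsto_integral_filter_of_dominated_convergence (fun _ => A * B)
    (.of_forall fun n => ?_) (.of_forall fun n => ?_) intervalIntegrable_const ?_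
  · rw [uIoc_of_le zero_le_one]
    exact ((hω.intervalIntegrable (left_mem_Icc.2 zero_le_one)
      (right_mem_Icc.2 zero_le_one)).mul_continuousOn (hF n).continuousOn).1.aestronglyMeasurable
  · filter_upwards [hIoo] with t ht htI
    rw [norm_mul]
    exact mul_le_mul (hA t (ht htI)) (hB n t (Ioo_subset_Icc_self (ht htI))) (norm_nonneg _)
      ((abs_nonneg _).trans (hA t (ht htI)))
  · filter_upwards [hIoo] with t ht htI
    exact (hlim t (Ioo_subset_Icc_self (ht htI))).const_mul _

lemma exists_contDiff_approx {φ φd : ℝ → ℝ} (hφ : ContinuousOn φ (Icc 0 1))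
    (hd : ∀ x ∈ Ioo (0 : ℝ) 1, HasDerivAt φ (φd x) x) (hφd : ContinuousOn φd (Icc 0 1)) :
    ∃ (W : ℕ → ℝ → ℝ) (B : ℝ), (∀ n, ContDiff ℝ (⊤ : ℕ∞) (W n)) ∧
      (∀ n, ∀ x ∈ Icc (0 : ℝ) 1, |W n x| ≤ B ∧ |deriv (W n) x| ≤ B) ∧
      ∀ x ∈ Icc (0 : ℝ) 1, Tendsto (fun n => W n x) atTop (𝓝 (φ x)) ∧
        Tendsto (fun n => deriv (W n) x) atTop (𝓝 (φd x)) := by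
  choose W hW hnear using fun n : ℕ =>
    exists_contDiff_near hφ hd hφd (r := 1 / ((n : ℝ) + 1)) (by positivity)
  obtain ⟨A, hA⟩ := isCompact_Icc.exists_bound_of_continuousOn hφ
  obtain ⟨A', hA'⟩ := isCompact_Icc.exists_bound_of_continuousOn hφd
  have hle : ∀ n : ℕ, 1 / ((n : ℝ) + 1) ≤ 1 := fun n => by
    rw [div_le_one (by positivity)]
    linarith [n.cast_nonneg (α := ℝ)]
  have hbound : ∀ {a b A : ℝ} {n : ℕ}, |a - b| ≤ 1 / ((n : ℝ) + 1) → ‖b‖ ≤ A → |a| ≤ A + 1 :=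
    fun {a b A n} hab hb => by
      have := abs_sub_abs_le_abs_sub a b
      rw [Real.norm_eq_abs] at hb
      linarith [hle n]
  have hlim : ∀ {f : ℕ → ℝ} {b : ℝ}, (∀ n : ℕ, |f n - b| ≤ 1 / ((n : ℝ) + 1)) →
      Tendsto f atTop (𝓝 b) := fun h =>
    tendsto_iff_norm_sub_tendsto_zero.2
      (squeeze_zero (fun _ => norm_nonneg _) h tendsto_one_div_add_atTop_nhds_zero_nat)
  refine ⟨W, max (A + 1) (A' + 1), hW, fun n x hx => ⟨?_, ?_⟩, fun x hx => ⟨?_, ?_⟩⟩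
  · exact (hbound (hnear n x hx).1 (hA x hx)).trans (le_max_left _ _)
  · exact (hbound (hnear n x hx).2 (hA' x hx)).trans (le_max_right _ _)
  · exact hlim fun n => (hnear n x hx).1
  · exact hlim fun n => (hnear n x hx).2

lemma IsFirstEigenfunction.integral_sq_pos {m : ℕ} {ω φ : ℝ → ℝ} {μ s : ℝ}
    (hω : DoublingWeight m ω) (h : IsFirstEigenfunction ω μ φ s) :
    0 < ∫ t in (0 : ℝ)..1, ω t * φ t ^ 2 := by
  have hωφ := hω.bddContinuousOn.mul h.isFluxSolution.bddContinuousOn.pow_two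
  obtain ⟨hs0, hs1⟩ := h.mem_Ioo
  have hleft := hωφ.integral_pos le_rfl hs0 hs1.le fun t ht =>
    mul_pos (hω.pos t ⟨ht.1, ht.2.trans hs1⟩) (pow_pos (h.pos t ht) 2)
  have hright := hωφ.integral_pos hs0.le hs1 le_rfl fun t ht =>
    mul_pos (hω.pos t ⟨hs0.trans ht.1, ht.2⟩) (sq_pos_of_neg (h.neg t ht))
  have hsplit := intervalIntegral.integral_add_adjacent_intervals
    (hωφ.intervalIntegrable (left_mem_Icc.2 zero_le_one) ⟨hs0.le, hs1.le⟩)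
    (hωφ.intervalIntegrable ⟨hs0.le, hs1.le⟩ (right_mem_Icc.2 zero_le_one))
  linarith

lemma NeumannSol.le_of_weightedPoincare {m : ℕ} {ω φ φd : ℝ → ℝ} {lam μ : ℝ}
    {s : ℝ} (hω : DoublingWeight m ω) (h : NeumannSol ω μ φ φd)
    (hφ : IsFirstEigenfunction ω μ φ s) (hlam : WeightedPoincare ω lam) : lam ≤ μ := by
  obtain ⟨W, B, hW, hB, hlim⟩ :=
    exists_contDiff_approx h.continuousOn (fun x hx => h.hasDerivAt hx) h.2.1
  have hWc : ∀ n, Continuous (W n) := fun n => (hW n).continuous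
  have hW'c : ∀ n, Continuous (deriv (W n)) := fun n => (hW n).continuous_deriv (by simp)
  have hsq : ∀ {a : ℝ}, |a| ≤ B → |a ^ 2| ≤ B ^ 2 := fun ha => by
    rw [abs_pow]
    gcongr
  have hωb := hω.bddContinuousOn
  have hL1 := tendsto_integral_mul_of_bounded hωb hWc (fun n t ht => (hB n t ht).1)
    fun t ht => (hlim t ht).1
  have hL2 := tendsto_integral_mul_of_bounded hωb (fun n => (hWc n).pow 2)
    (fun n t ht => hsq (hB n t ht).1) fun t ht => (hlim t ht).1.pow 2
  have hL3 := tendsto_integral_mul_of_bounded hωb (fun n => (hW'c n).pow 2)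
    (fun n t ht => hsq (hB n t ht).2) fun t ht => (hlim t ht).2.pow 2
  have hle := le_of_tendsto_of_tendsto' ((hL2.sub ((hL1.pow 2).div_const _)).const_mul lam) hL3
    fun n => hlam (W n) (hW n)
  rw [hφ.isFluxSolution.integral_eq_zero, h.energy_eq hω, zero_pow two_ne_zero,
    zero_div, sub_zero] at hle
  exact le_of_mul_le_mul_right hle (hφ.integral_sq_pos hω)
section Averages

variable {α : Type*} [MeasurableSpace α] {ν : Measure α} {A B : Set α} {g : α → ℝ} {O k : ℝ}

lemma abs_setAverage_sub_setAverage_le_of_forall {f : α → ℝ} (hB0 : ν B ≠ 0) (hB : ν B ≠ ⊤)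
    (hf : IntegrableOn f B ν) (hg : IntegrableOn g B ν) (hO : ∀ y ∈ B, |f y - g y| ≤ O) :
    |(⨍ y in B, f y ∂ν) - ⨍ y in B, g y ∂ν| ≤ O := by
  have hpos : 0 < ν.real B := ENNReal.toReal_pos hB0 hB
  rw [setAverage_eq, setAverage_eq, ← smul_sub, ← integral_sub hf hg, smul_eq_mul,
    abs_mul, abs_of_pos (inv_pos.2 hpos), inv_mul_le_iff₀ hpos, mul_comm]
  exact norm_setIntegral_le_of_norm_le_const (f := fun y => f y - g y) hB.lt_top hO

lemma abs_setAverage_sub_le (hB0 : ν B ≠ 0) (hB : ν B ≠ ⊤) (hg : IntegrableOn g B ν)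
    (hO : ∀ y ∈ B, |g y - k| ≤ O) : |(⨍ y in B, g y ∂ν) - k| ≤ O := by
  simpa only [setAverage_const hB0 hB] using
    abs_setAverage_sub_setAverage_le_of_forall hB0 hB hg (integrableOn_const hB) hO

lemma abs_setAverage_sub_setAverage_le (hA : MeasurableSet A) (hBm : MeasurableSet B)
    (hAB : A ⊆ B) (hA0 : ν A ≠ 0) (hB : ν B ≠ ⊤) (hg : IntegrableOn g B ν)
    (hO : ∀ y ∈ B, ∀ z ∈ B, |g y - g z| ≤ O) :
    |(⨍ y in B, g y ∂ν) - ⨍ y in A, g y ∂ν| ≤ (1 - ν.real A / ν.real B) * O := by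
  have hAt : ν A ≠ ⊤ := measure_ne_top_of_subset hAB hB
  have hB0 : ν B ≠ 0 := fun h => hA0 (measure_mono_null hAB h)
  have hpos : 0 < ν.real B := ENNReal.toReal_pos hB0 hB
  set M := ⨍ y in A, g y ∂ν
  have hgM : IntegrableOn (fun y => g y - M) B ν := hg.sub (integrableOn_const hB)
  have hosc : ∀ y ∈ B, |g y - M| ≤ O := fun y hy => by
    rw [abs_sub_comm]
    exact abs_setAverage_sub_le hA0 hAt (hg.mono_set hAB) fun z hz => hO z (hAB hz) y hy
  have hzero : ∫ y in A, (g y - M) ∂ν = 0 := by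
    rw [integral_sub (hg.mono_set hAB) (integrableOn_const hAt), setIntegral_const,
      measure_smul_setAverage g hAt, sub_self]
  have hdiff : ∫ y in B, (g y - M) ∂ν = ∫ y in B \ A, (g y - M) ∂ν := by
    rw [← union_sdiff_cancel hAB, setIntegral_union disjoint_sdiff_right (hBm.diff hA)
      (hgM.mono_set hAB) (hgM.mono_set sdiff_subset), hzero, zero_add, union_sdiff_cancel hAB]
  have hM : M = (ν.real B)⁻¹ • ∫ _ in B, M ∂ν := by
    rw [← setAverage_eq, setAverage_const hB0 hB]
  rw [setAverage_eq, hM, ← smul_sub, ← integral_sub hg (integrableOn_const hB), hdiff,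
    smul_eq_mul, abs_mul, abs_of_pos (inv_pos.2 hpos), inv_mul_le_iff₀ hpos]
  calc |∫ y in B \ A, (g y - M) ∂ν| ≤ O * ν.real (B \ A) :=
        norm_setIntegral_le_of_norm_le_const (f := fun y => g y - M)
          ((measure_mono sdiff_subset).trans_lt hB.lt_top) fun y hy => hosc y hy.1
    _ = ν.real B * ((1 - ν.real A / ν.real B) * O) := by
        rw [measureReal_sdiff hAB hA hB]
        field_simp

lemma setAverage_image_homothety {E : Type*} [NormedAddCommGroup E] [NormedSpace ℝ E]
    [FiniteDimensional ℝ E] [MeasurableSpace E] [BorelSpace E] {ν : Measure E}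
    [ν.IsAddHaarMeasure] {s : Set E} (hs : MeasurableSet s) (z : E) {c : ℝ} (hc : c ≠ 0)
    (g : E → ℝ) :
    ⨍ y in AffineMap.homothety z c '' s, g y ∂ν = ⨍ y in s, g (AffineMap.homothety z c y) ∂ν := by
  have hderiv : ∀ y ∈ s, HasFDerivWithinAt (AffineMap.homothety z c)
      (c • ContinuousLinearMap.id ℝ E) s y := fun y _ => by
    simpa [funext (AffineMap.homothety_apply z c)] using
      ((((hasFDerivAt_id (𝕜 := ℝ) y).sub_const z).const_smul c).add_const z).hasFDerivWithinAt
  have hinj : InjOn (AffineMap.homothety z c) s := fun y _ y' _ h => by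
    simpa [AffineMap.homothety_apply, hc] using h
  have hdet : (c • ContinuousLinearMap.id ℝ E).det = c ^ Module.finrank ℝ E := by
    simp [ContinuousLinearMap.det, LinearMap.det_smul]
  have hne : |c ^ Module.finrank ℝ E| ≠ 0 := by positivity
  rw [setAverage_eq, setAverage_eq, integral_image_eq_integral_abs_det_fderiv_smul ν hs hderiv hinj,
    hdet, integral_smul, measureReal_def, Measure.addHaar_image_homothety, ENNReal.toReal_mul,
    ENNReal.toReal_ofReal (abs_nonneg _), measureReal_def, smul_smul, mul_inv, mul_right_comm,
    inv_mul_cancel₀ hne, one_mul]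

end Averages

section Coordinates

variable {m : ℕ}

/-- The last `m` coordinates `y` of the point `(x, y)`. -/
def tailPt (p : EuclideanSpace ℝ (Fin (m + 1))) : EuclideanSpace ℝ (Fin m) :=
  WithLp.toLp 2 fun i => p i.succ

@[simp] lemma mkPt_apply_zero (x : ℝ) (y : EuclideanSpace ℝ (Fin m)) : mkPt m x y 0 = x := rfl

@[simp] lemma mkPt_apply_succ (x : ℝ) (y : EuclideanSpace ℝ (Fin m)) (i : Fin m) :
    mkPt m x y i.succ = y i := rfl

lemma mkPt_tailPt (p : EuclideanSpace ℝ (Fin (m + 1))) : mkPt m (p 0) (tailPt p) = p := by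
  ext i
  refine Fin.cases ?_ (fun i => ?_) i <;> rfl

lemma smul_mkPt_add_smul_mkPt (a b x x' : ℝ) (y y' : EuclideanSpace ℝ (Fin m)) :
    a • mkPt m x y + b • mkPt m x' y' = mkPt m (a * x + b * x') (a • y + b • y') := by
  ext i
  refine Fin.cases ?_ (fun i => ?_) i <;> simp

lemma mkPt_sub_mkPt (x x' : ℝ) (y y' : EuclideanSpace ℝ (Fin m)) :
    mkPt m x y - mkPt m x' y' = mkPt m (x - x') (y - y') := by
  ext i
  refine Fin.cases ?_ (fun i => ?_) i <;> simp

lemma mkPt_eq_smul_single_add (x : ℝ) (y : EuclideanSpace ℝ (Fin m)) :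
    mkPt m x y = x • EuclideanSpace.single 0 1 + mkPt m 0 y := by
  ext i
  refine Fin.cases ?_ (fun i => ?_) i <;> simp

lemma norm_mkPt_sq (x : ℝ) (y : EuclideanSpace ℝ (Fin m)) :
    ‖mkPt m x y‖ ^ 2 = x ^ 2 + ‖y‖ ^ 2 := by
  rw [EuclideanSpace.norm_sq_eq, EuclideanSpace.norm_sq_eq, Fin.sum_univ_succ]
  simp

lemma norm_mkPt_le (x : ℝ) (y : EuclideanSpace ℝ (Fin m)) : ‖mkPt m x y‖ ≤ |x| + ‖y‖ := by
  refine le_of_sq_le_sq ?_ (by positivity)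
  rw [norm_mkPt_sq]
  nlinarith [sq_abs x, mul_nonneg (abs_nonneg x) (norm_nonneg y)]

lemma continuous_mkPt : Continuous fun q : ℝ × EuclideanSpace ℝ (Fin m) => mkPt m q.1 q.2 := by
  refine (PiLp.continuous_toLp 2 _).comp (continuous_pi fun i => ?_)
  refine Fin.cases ?_ (fun i => ?_) i
  · exact continuous_fst
  · exact (EuclideanSpace.proj (𝕜 := ℝ) i).continuous.comp continuous_snd

lemma measurePreserving_mkPt :
    MeasurePreserving fun q : ℝ × EuclideanSpace ℝ (Fin m) => mkPt m q.1 q.2 := by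
  have h := (PiLp.volume_preserving_toLp (Fin (m + 1))).comp
    ((volume_preserving_piFinSuccAbove (fun _ : Fin (m + 1) => ℝ) 0).symm.comp
      ((MeasurePreserving.id (volume : Measure ℝ)).prod (PiLp.volume_preserving_ofLp (Fin m))))
  convert h using 1
  · funext q
    ext i
    refine Fin.cases ?_ (fun i => ?_) i <;>
      simp [MeasurableEquiv.piFinSuccAbove, Fin.insertNthEquiv]
  · rfl

lemma measurableEmbedding_mkPt :
    MeasurableEmbedding fun q : ℝ × EuclideanSpace ℝ (Fin m) => mkPt m q.1 q.2 :=
  continuous_mkPt.measurableEmbedding fun _ _ h => Prod.ext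
    (congrArg (fun p : EuclideanSpace ℝ (Fin (m + 1)) => p 0) h)
    (congrArg (fun p : EuclideanSpace ℝ (Fin (m + 1)) => tailPt p) h)

end Coordinates
/-- A convex domain `Ω ⊆ (0, 1) × B(ε)` whose cross-sections over `(0, 1)` are all nonempty. -/
structure ThinDomain (m : ℕ) (ε : ℝ) (Ω : Set (EuclideanSpace ℝ (Fin (m + 1)))) : Prop where
  isOpen : IsOpen Ω
  convex : Convex ℝ Ω
  subset : ∀ x y, mkPt m x y ∈ Ω →
    x ∈ Ioo (0 : ℝ) 1 ∧ y ∈ Metric.ball (0 : EuclideanSpace ℝ (Fin m)) ε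
  nonempty : ∀ x ∈ Ioo (0 : ℝ) 1, (cross Ω x).Nonempty

namespace ThinDomain

variable {m : ℕ} {ε x : ℝ} {Ω : Set (EuclideanSpace ℝ (Fin (m + 1)))}
  {p : EuclideanSpace ℝ (Fin (m + 1))} {g : EuclideanSpace ℝ (Fin (m + 1)) → ℝ}

lemma mem_Ioo (h : ThinDomain m ε Ω) (hp : p ∈ Ω) : p 0 ∈ Ioo (0 : ℝ) 1 :=
  (h.subset (p 0) (tailPt p) (by rwa [mkPt_tailPt])).1

lemma norm_lt (h : ThinDomain m ε Ω) {y : EuclideanSpace ℝ (Fin m)} (hy : y ∈ cross Ω x) :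
    ‖y‖ < ε := by
  simpa using (h.subset x y hy).2

lemma norm_tailPt_lt (h : ThinDomain m ε Ω) (hp : p ∈ Ω) : ‖tailPt p‖ < ε :=
  h.norm_lt (x := p 0) (by rwa [cross, mem_ofPred_eq, mkPt_tailPt])

lemma isOpen_cross (h : ThinDomain m ε Ω) (x : ℝ) : IsOpen (cross Ω x) :=
  h.isOpen.preimage (continuous_mkPt.comp (Continuous.prodMk_right x))

lemma cross_subset (h : ThinDomain m ε Ω) (x : ℝ) : cross Ω x ⊆ Metric.ball 0 ε :=
  fun y hy => (h.subset x y hy).2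

lemma cross_eq_empty (h : ThinDomain m ε Ω) (hx : x ∉ Ioo (0 : ℝ) 1) : cross Ω x = ∅ :=
  eq_empty_of_forall_notMem fun y hy => hx (h.subset x y hy).1

lemma volume_cross_ne_top (h : ThinDomain m ε Ω) (x : ℝ) : volume (cross Ω x) ≠ ⊤ :=
  measure_ne_top_of_subset (h.cross_subset x) measure_ball_lt_top.ne

lemma volume_cross_ne_zero (h : ThinDomain m ε Ω) (hx : x ∈ Ioo (0 : ℝ) 1) :
    volume (cross Ω x) ≠ 0 :=
  ((h.isOpen_cross x).measure_pos volume (h.nonempty x hx)).ne'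

lemma ωvol_pos (h : ThinDomain m ε Ω) (hx : x ∈ Ioo (0 : ℝ) 1) : 0 < ωvol Ω x :=
  ENNReal.toReal_pos (h.volume_cross_ne_zero hx) (h.volume_cross_ne_top x)

lemma nonempty_domain (h : ThinDomain m ε Ω) : Ω.Nonempty :=
  (h.nonempty 2⁻¹ (by norm_num)).imp' _ fun _ hy => hy

lemma eps_pos (h : ThinDomain m ε Ω) : 0 < ε :=
  let ⟨_, hy⟩ := h.nonempty 2⁻¹ (by norm_num)
  (norm_nonneg _).trans_lt (h.norm_lt hy)

lemma isBounded (h : ThinDomain m ε Ω) : Bornology.IsBounded Ω := by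
  refine (Metric.isBounded_ball (x := 0) (r := 1 + ε)).subset fun p hp => ?_
  have hp0 := h.mem_Ioo hp
  have hle := norm_mkPt_le (p 0) (tailPt p)
  rw [mkPt_tailPt, abs_of_pos hp0.1] at hle
  rw [mem_ball_zero_iff]
  linarith [hp0.2, h.norm_tailPt_lt hp]

lemma isCompact_closure (h : ThinDomain m ε Ω) : IsCompact (closure Ω) :=
  h.isBounded.isCompact_closure

lemma volume_lt_top (h : ThinDomain m ε Ω) : volume Ω < ⊤ := h.isBounded.measure_lt_top

lemma bddContinuousOn (h : ThinDomain m ε Ω) (hg : ContinuousOn g (closure Ω)) :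
    BddContinuousOn g Ω :=
  (BddContinuousOn.of_isCompact h.isCompact_closure hg).mono subset_closure

lemma integrableOn (h : ThinDomain m ε Ω) (hg : BddContinuousOn g Ω) : IntegrableOn g Ω :=
  hg.integrableOn h.isOpen.measurableSet h.volume_lt_top

lemma bddContinuousOn_cross (hg : BddContinuousOn g Ω) (x : ℝ) :
    BddContinuousOn (fun y => g (mkPt m x y)) (cross Ω x) :=
  hg.comp (continuous_mkPt.comp (Continuous.prodMk_right x)).continuousOn fun _ hy => hy

lemma integrableOn_cross (h : ThinDomain m ε Ω) (hg : BddContinuousOn g Ω) (x : ℝ) :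
    IntegrableOn (fun y => g (mkPt m x y)) (cross Ω x) :=
  (bddContinuousOn_cross hg x).integrableOn (h.isOpen_cross x).measurableSet
    (h.volume_cross_ne_top x).lt_top

section Volume

variable {s r t θ : ℝ}

lemma add_smul_mem_cross (h : ThinDomain m ε Ω) (h0 : 0 ≤ θ) (h1 : θ ≤ 1)
    {y z : EuclideanSpace ℝ (Fin m)} (hy : y ∈ cross Ω s) (hz : z ∈ cross Ω r) :
    (1 - θ) • y + θ • z ∈ cross Ω ((1 - θ) * s + θ * r) := by
  have hmem := h.convex hy hz (sub_nonneg.2 h1) h0 (sub_add_cancel 1 θ)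
  rwa [smul_mkPt_add_smul_mkPt] at hmem

lemma homothety_image_cross_subset (h : ThinDomain m ε Ω) (h0 : 0 ≤ θ) (h1 : θ ≤ 1)
    {z : EuclideanSpace ℝ (Fin m)} (hz : z ∈ cross Ω r) :
    AffineMap.homothety z (1 - θ) '' cross Ω s ⊆ cross Ω ((1 - θ) * s + θ * r) := by
  rintro _ ⟨y, hy, rfl⟩
  convert h.add_smul_mem_cross h0 h1 hy hz using 1
  rw [AffineMap.homothety_eq_lineMap, AffineMap.lineMap_apply_module]
  module

lemma volume_real_homothety_image_cross (h1 : θ ≤ 1) (z : EuclideanSpace ℝ (Fin m)) :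
    volume.real (AffineMap.homothety z (1 - θ) '' cross Ω s) = (1 - θ) ^ m * ωvol Ω s := by
  rw [measureReal_def, Measure.addHaar_image_homothety, finrank_euclideanSpace_fin,
    ENNReal.toReal_mul, ENNReal.toReal_ofReal (abs_nonneg _),
    abs_of_nonneg (pow_nonneg (sub_nonneg.2 h1) m), ωvol]

lemma pow_mul_ωvol_le (h : ThinDomain m ε Ω) (h0 : 0 ≤ θ) (h1 : θ ≤ 1)
    (hr : r ∈ Ioo (0 : ℝ) 1) :
    (1 - θ) ^ m * ωvol Ω s ≤ ωvol Ω ((1 - θ) * s + θ * r) := by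
  obtain ⟨z, hz⟩ := h.nonempty r hr
  rw [← volume_real_homothety_image_cross h1 z]
  exact measureReal_mono (h.homothety_image_cross_subset h0 h1 hz) (h.volume_cross_ne_top _)

lemma pow_abs_sub_mul_ωvol_le (h : ThinDomain m ε Ω) (hs : s ∈ Ioo (0 : ℝ) 1)
    (hr : r ∈ Ioo (0 : ℝ) 1) (ht : t ∈ segment ℝ s r) :
    |r - t| ^ m * ωvol Ω s ≤ ωvol Ω t := by
  obtain ⟨a, b, ha, hb, hab, rfl⟩ := ht
  obtain rfl : a = 1 - b := by linarith
  have hdist : |r - s| ≤ 1 := abs_le.2 ⟨by linarith [hs.2, hr.1], by linarith [hs.1, hr.2]⟩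
  have heq : r - ((1 - b) • s + b • r) = (1 - b) * (r - s) := by
    simp only [smul_eq_mul]
    ring
  have hbase : |r - ((1 - b) • s + b • r)| ≤ 1 - b := by
    rw [heq, abs_mul, abs_of_nonneg ha]
    exact mul_le_of_le_one_right ha hdist
  exact (mul_le_mul_of_nonneg_right (pow_le_pow_left₀ (abs_nonneg _) hbase m)
    ENNReal.toReal_nonneg).trans (h.pow_mul_ωvol_le hb (by linarith) hr)

lemma ωvol_le_of_mem_segment (h : ThinDomain m ε Ω) (hs : s ∈ Ioo (0 : ℝ) 1)
    (hr : r ∈ Ioo (0 : ℝ) 1) (ht : t ∈ segment ℝ s r) (htr : t ≠ r) :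
    ωvol Ω s ≤ |r - t|⁻¹ ^ m * ωvol Ω t := by
  rw [inv_pow, le_inv_mul_iff₀ (pow_pos (abs_pos.2 (sub_ne_zero.2 htr.symm)) m)]
  exact h.pow_abs_sub_mul_ωvol_le hs hr ht

lemma ωvol_le_right (h : ThinDomain m ε Ω) (hs : 0 < s) (hst : s < t) (ht : t < 1) :
    ωvol Ω s ≤ (2 / (1 - t)) ^ m * ωvol Ω t := by
  have hvol := h.ωvol_le_of_mem_segment (r := (1 + t) / 2) ⟨hs, hst.trans ht⟩
    ⟨by linarith, by linarith⟩
    (by rw [segment_eq_Icc (by linarith)]; exact ⟨hst.le, by linarith⟩) (by linarith)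
  rwa [show (1 + t) / 2 - t = (1 - t) / 2 by ring, abs_of_pos (by linarith), inv_div] at hvol

lemma ωvol_le_left (h : ThinDomain m ε Ω) (hs : 0 < s) (hst : s < t) (ht : t < 1) :
    ωvol Ω t ≤ (2 / s) ^ m * ωvol Ω s := by
  have hvol := h.ωvol_le_of_mem_segment (r := s / 2) ⟨hs.trans hst, ht⟩
    ⟨by linarith, by linarith⟩
    (by rw [segment_symm, segment_eq_Icc (by linarith)]; exact ⟨by linarith, hst.le⟩) (by linarith)
  rwa [show s / 2 - s = -(s / 2) by ring, abs_neg, abs_of_pos (by linarith), inv_div] at hvol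

end Volume

lemma setIntegral_eq (h : ThinDomain m ε Ω) (hg : IntegrableOn g Ω) :
    ∫ p in Ω, g p = ∫ x in (0 : ℝ)..1, ∫ y in cross Ω x, g (mkPt m x y) := by
  have hmeas : MeasurableSet ((fun q : ℝ × EuclideanSpace ℝ (Fin m) => mkPt m q.1 q.2) ⁻¹' Ω) :=
    continuous_mkPt.measurable h.isOpen.measurableSet
  have hint := (integrable_indicator_iff hmeas).2
    ((measurePreserving_mkPt.integrableOn_comp_preimage measurableEmbedding_mkPt).2 hg)
  rw [← measurePreserving_mkPt.setIntegral_preimage_emb measurableEmbedding_mkPt,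
    ← integral_indicator hmeas]
  rw [Measure.volume_eq_prod] at hint ⊢
  refine (integral_prod _ hint).trans ?_
  rw [intervalIntegral.integral_of_le zero_le_one, integral_Ioc_eq_integral_Ioo]
  rw [← setIntegral_eq_integral_of_forall_compl_eq_zero (s := Ioo 0 1)]
  · exact integral_congr_ae (.of_forall fun x =>
      integral_indicator (h.isOpen_cross x).measurableSet)
  · refine fun x hx => (integral_indicator (h.isOpen_cross x).measurableSet).trans ?_
    rw [h.cross_eq_empty hx, setIntegral_empty]

lemma mem_closure_cross (h : ThinDomain m ε Ω) (hx : x ∈ Ioo (0 : ℝ) 1)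
    {y : EuclideanSpace ℝ (Fin m)} (hy : mkPt m x y ∈ closure Ω) : y ∈ closure (cross Ω x) := by
  obtain ⟨y₀, hy₀⟩ := h.nonempty x hx
  have hsub : openSegment ℝ y₀ y ⊆ cross Ω x := by
    rintro _ ⟨a, b, ha, hb, hab, rfl⟩
    have hmem := h.convex.openSegment_interior_closure_subset_interior
      (h.isOpen.interior_eq.symm ▸ hy₀) hy ⟨a, b, ha, hb, hab, rfl⟩
    rw [smul_mkPt_add_smul_mkPt, ← add_mul, hab, one_mul] at hmem
    exact h.isOpen.interior_eq ▸ hmem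
  refine closure_mono hsub ?_
  rw [closure_openSegment]
  exact right_mem_segment ℝ y₀ y

lemma convex_cross (h : ThinDomain m ε Ω) (x : ℝ) : Convex ℝ (cross Ω x) := by
  intro y hy y' hy' a b ha hb hab
  have hmem := h.convex hy hy' ha hb hab
  rwa [smul_mkPt_add_smul_mkPt, ← add_mul, hab, one_mul] at hmem

lemma ae_notMem_frontier (h : ThinDomain m ε Ω) (hx : x ∈ Ioo (0 : ℝ) 1) :
    ∀ᵐ y : EuclideanSpace ℝ (Fin m), mkPt m x y ∉ frontier Ω := by
  refine measure_mono_null (fun y hy => ?_) ((h.convex_cross x).addHaar_frontier volume)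
  rw [mem_compl_iff, mem_ofPred_eq, not_not, h.isOpen.frontier_eq] at hy
  rw [(h.isOpen_cross x).frontier_eq]
  exact ⟨h.mem_closure_cross hx hy.1, hy.2⟩

lemma continuousOn_setIntegral_cross (h : ThinDomain m ε Ω) (hg : BddContinuousOn g Ω) :
    ContinuousOn (fun x => ∫ y in cross Ω x, g (mkPt m x y)) (Ioo 0 1) := by
  intro x hx
  obtain ⟨B, hB⟩ := hg.2
  have hind : ∀ x, ∫ y in cross Ω x, g (mkPt m x y) = ∫ y, Ω.indicator g (mkPt m x y) := fun x =>
    (integral_indicator (h.isOpen_cross x).measurableSet).symm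
  simp only [hind]
  refine (continuousAt_of_dominated (F := fun x y => Ω.indicator g (mkPt m x y))
    (bound := (Metric.ball 0 ε).indicator fun _ => B) (.of_forall fun x => ?_)
    (.of_forall fun x => .of_forall fun y => ?_)
    ((integrable_indicator_iff measurableSet_ball).2
      (integrableOn_const measure_ball_lt_top.ne)) ?_).continuousWithinAt
  · exact ((integrable_indicator_iff (h.isOpen_cross x).measurableSet).2
      (h.integrableOn_cross hg x)).1
  · by_cases hy : mkPt m x y ∈ Ω
    · rw [indicator_of_mem hy, indicator_of_mem (h.cross_subset x hy)]
      exact hB _ hy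
    · rw [indicator_of_notMem hy, norm_zero]
      refine indicator_nonneg (fun _ _ => ?_) y
      obtain ⟨p, hp⟩ := h.nonempty_domain
      exact (abs_nonneg _).trans (hB p hp)
  · filter_upwards [h.ae_notMem_frontier hx] with y hy
    have hat : ContinuousAt (Ω.indicator g) (mkPt m x y) :=
      ContinuousOn.continuousAt_indicator (by rw [h.isOpen.interior_eq]; exact hg.1) hy
    exact hat.comp (f := fun x => mkPt m x y)
      (continuous_mkPt.comp (Continuous.prodMk_left y)).continuousAt

lemma ubarFn_eq_setAverage (x : ℝ) : ubarFn Ω g x = ⨍ y in cross Ω x, g (mkPt m x y) := by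
  rw [setAverage_eq, ubarFn, ωvol, smul_eq_mul, inv_mul_eq_div, measureReal_def]

lemma ωvol_mul_ubarFn (h : ThinDomain m ε Ω) (hx : x ∈ Ioo (0 : ℝ) 1) :
    ωvol Ω x * ubarFn Ω g x = ∫ y in cross Ω x, g (mkPt m x y) :=
  mul_div_cancel₀ _ (h.ωvol_pos hx).ne'

lemma abs_ubarFn_sub_le (h : ThinDomain m ε Ω) (hg : BddContinuousOn g Ω)
    (hx : x ∈ Ioo (0 : ℝ) 1) {k O : ℝ} (hO : ∀ y ∈ cross Ω x, |g (mkPt m x y) - k| ≤ O) :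
    |ubarFn Ω g x - k| ≤ O := by
  rw [ubarFn_eq_setAverage]
  exact abs_setAverage_sub_le (h.volume_cross_ne_zero hx) (h.volume_cross_ne_top x)
    (h.integrableOn_cross hg x) hO

lemma bddContinuousOn_ωvol (h : ThinDomain m ε Ω) : BddContinuousOn (ωvol Ω) (Ioo 0 1) := by
  refine ⟨(h.continuousOn_setIntegral_cross (.const 1)).congr fun x _ => ?_,
    volume.real (Metric.ball (0 : EuclideanSpace ℝ (Fin m)) ε), fun x _ => ?_⟩
  · simp [measureReal_def, ωvol]
  · rw [ωvol, abs_of_nonneg ENNReal.toReal_nonneg]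
    exact measureReal_mono (h.cross_subset x) measure_ball_lt_top.ne

lemma doublingWeight (h : ThinDomain m ε Ω) : DoublingWeight m (ωvol Ω) where
  bddContinuousOn := h.bddContinuousOn_ωvol
  pos _ := h.ωvol_pos
  le_right _ _ := h.ωvol_le_right
  le_left _ _ := h.ωvol_le_left

lemma bddContinuousOn_ubarFn (h : ThinDomain m ε Ω) (hg : BddContinuousOn g Ω) :
    BddContinuousOn (ubarFn Ω g) (Ioo 0 1) := by
  refine ⟨(h.continuousOn_setIntegral_cross hg).div h.bddContinuousOn_ωvol.1
    fun x hx => (h.ωvol_pos hx).ne', hg.2.imp fun B hB x hx => ?_⟩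
  rw [← sub_zero (ubarFn Ω g x)]
  exact h.abs_ubarFn_sub_le hg hx fun y hy => by simpa using hB _ hy

lemma bddContinuousOn_comp_zero (h : ThinDomain m ε Ω) {W : ℝ → ℝ}
    (hW : ContinuousOn W (Icc 0 1)) : BddContinuousOn (fun p => W (p 0)) Ω :=
  (BddContinuousOn.of_isCompact isCompact_Icc hW).comp (by fun_prop) fun _ hp =>
    Ioo_subset_Icc_self (h.mem_Ioo hp)

lemma setIntegral_mul_eq (h : ThinDomain m ε Ω) {W : ℝ → ℝ} (hW : ContinuousOn W (Icc 0 1))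
    (hg : BddContinuousOn g Ω) :
    ∫ p in Ω, W (p 0) * g p = ∫ x in (0 : ℝ)..1, ωvol Ω x * (W x * ubarFn Ω g x) := by
  rw [h.setIntegral_eq (h.integrableOn ((h.bddContinuousOn_comp_zero hW).mul hg)),
    intervalIntegral.integral_of_le zero_le_one,
    intervalIntegral.integral_of_le zero_le_one, integral_Ioc_eq_integral_Ioo,
    integral_Ioc_eq_integral_Ioo]
  refine setIntegral_congr_fun measurableSet_Ioo fun x hx => ?_
  simp only [mkPt_apply_zero]
  rw [integral_const_mul, ← h.ωvol_mul_ubarFn hx]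
  ring

end ThinDomain

section Calculus

section FDeriv

variable {E : Type*} [NormedAddCommGroup E] [NormedSpace ℝ E] {Ω : Set E} {u : E → ℝ}

lemma continuousOn_fderivWithin_closure (hΩ : IsOpen Ω) (hconv : Convex ℝ Ω)
    (hu : ContDiffOn ℝ 1 u (closure Ω)) :
    ContinuousOn (fderivWithin ℝ u (closure Ω)) (closure Ω) := by
  rcases Ω.eq_empty_or_nonempty with rfl | hne
  · simp
  · exact hu.continuousOn_fderivWithin (uniqueDiffOn_convex hconv.closure
      (hne.mono (interior_maximal subset_closure hΩ))) le_rfl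

lemma fderivWithin_closure_eq (hΩ : IsOpen Ω) :
    EqOn (fderivWithin ℝ u (closure Ω)) (fderiv ℝ u) Ω :=
  fun _ hp => fderivWithin_of_mem_nhds (mem_of_superset (hΩ.mem_nhds hp) subset_closure)

lemma differentiableAt_of_contDiffOn_closure (hΩ : IsOpen Ω) (hu : ContDiffOn ℝ 1 u (closure Ω))
    {p : E} (hp : p ∈ Ω) : DifferentiableAt ℝ u p :=
  (hu.contDiffAt (mem_of_superset (hΩ.mem_nhds hp) subset_closure)).differentiableAt one_ne_zero

lemma exists_forall_abs_sub_sub_fderiv_le (hΩ : IsOpen Ω) (hconv : Convex ℝ Ω)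
    (hcomp : IsCompact (closure Ω)) (hu : ContDiffOn ℝ 1 u (closure Ω)) {η : ℝ} (hη : 0 < η) :
    ∃ δ > 0, ∀ p ∈ Ω, ∀ q ∈ Ω, ‖q - p‖ < δ →
      |u q - u p - fderiv ℝ u p (q - p)| ≤ η * ‖q - p‖ := by
  obtain ⟨δ, hδ, hunif⟩ := Metric.uniformContinuousOn_iff.1
    (hcomp.uniformContinuousOn_of_continuous (continuousOn_fderivWithin_closure hΩ hconv hu)) η hη
  refine ⟨δ, hδ, fun p hp q hq hpq => ?_⟩
  refine Convex.norm_image_sub_le_of_norm_fderiv_le' (s := Ω ∩ Metric.ball p δ) (𝕜 := ℝ)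
    (fun z hz => differentiableAt_of_contDiffOn_closure hΩ hu hz.1) (fun z hz => ?_)
    (hconv.inter (convex_ball p δ)) ⟨hp, Metric.mem_ball_self hδ⟩
    ⟨hq, by rwa [mem_ball_iff_norm]⟩
  rw [← dist_eq_norm, ← fderivWithin_closure_eq hΩ hz.1, ← fderivWithin_closure_eq hΩ hp]
  exact (hunif z (subset_closure hz.1) p (subset_closure hp) hz.2).le

lemma bddContinuousOn_comp_fderiv (hΩ : IsOpen Ω) (hconv : Convex ℝ Ω)
    (hcomp : IsCompact (closure Ω)) (hu : ContDiffOn ℝ 1 u (closure Ω)) {F : (E →L[ℝ] ℝ) → ℝ}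
    (hF : Continuous F) : BddContinuousOn (fun p => F (fderiv ℝ u p)) Ω :=
  ((BddContinuousOn.of_isCompact hcomp (hF.comp_continuousOn
    (continuousOn_fderivWithin_closure hΩ hconv hu))).mono subset_closure).congr
      fun _ hp => congrArg F (fderivWithin_closure_eq hΩ hp)

end FDeriv

lemma abs_sub_le_of_eventually_abs_sub_le {D : ℝ → ℝ} {a b K : ℝ} (hab : a ≤ b)
    (hD : ContinuousOn D (Icc a b))
    (hslope : ∀ x ∈ Ico a b, ∀ᶠ z in 𝓝[>] x, |D z - D x| ≤ K * (z - x)) :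
    |D b - D a| ≤ K * (b - a) := by
  refine image_le_of_liminf_slope_right_le_deriv_boundary (f := fun x => |D x - D a|)
    (B := fun x => K * (x - a)) (B' := fun _ => K) (hD.sub continuousOn_const).abs (by simp)
    (by fun_prop) (fun x _ => ?_) (fun x hx r hr => ?_) (right_mem_Icc.2 hab)
  · simpa using (((hasDerivAt_id x).sub_const a).const_mul K).hasDerivWithinAt
  · refine Eventually.frequently ?_
    filter_upwards [hslope x hx, self_mem_nhdsWithin] with z hz hxz
    rw [slope_def_field, div_lt_iff₀ (sub_pos.2 hxz)]
    calc |D z - D a| - |D x - D a| ≤ |D z - D x| := by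
          simpa using abs_sub_abs_le_abs_sub (D z - D a) (D x - D a)
      _ ≤ K * (z - x) := hz
      _ < r * (z - x) := mul_lt_mul_of_pos_right hr (sub_pos.2 hxz)

end Calculus

/-- The homothety with centre `z ∈ Ω((1 + x) / 2)` and this ratio maps `Ω(x)` into `Ω(x + t)`. -/
def sectionRatio (x t : ℝ) : ℝ := 1 - 2 * t / (1 - x)

namespace ThinDomain

variable {m : ℕ} {ε L R x t : ℝ} {Ω : Set (EuclideanSpace ℝ (Fin (m + 1)))}
  {u v : EuclideanSpace ℝ (Fin (m + 1)) → ℝ} {p q : EuclideanSpace ℝ (Fin (m + 1))}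

lemma norm_sub_le (h : ThinDomain m ε Ω) (hp : p ∈ Ω) (hq : q ∈ Ω) :
    ‖p - q‖ ≤ |p 0 - q 0| + 2 * ε := by
  have hle := norm_mkPt_le (p 0 - q 0) (tailPt p - tailPt q)
  rw [← mkPt_sub_mkPt, mkPt_tailPt, mkPt_tailPt] at hle
  linarith [_root_.norm_sub_le (tailPt p) (tailPt q), h.norm_tailPt_lt hp, h.norm_tailPt_lt hq]

lemma abs_sub_le_of_norm_fderiv_le (h : ThinDomain m ε Ω) (hu : ContDiffOn ℝ 1 u (closure Ω))
    {I : Set ℝ} (hI : Convex ℝ I) (hR : ∀ p ∈ Ω, p 0 ∈ I → ‖fderiv ℝ u p‖ ≤ R)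
    (hp : p ∈ Ω) (hpI : p 0 ∈ I) (hq : q ∈ Ω) (hqI : q 0 ∈ I) :
    |u p - u q| ≤ R * (|p 0 - q 0| + 2 * ε) := by
  have hconv : Convex ℝ (Ω ∩ (EuclideanSpace.proj (𝕜 := ℝ) (0 : Fin (m + 1))) ⁻¹' I) :=
    h.convex.inter (hI.linear_preimage (EuclideanSpace.proj (𝕜 := ℝ) 0).toLinearMap)
  refine (Convex.norm_image_sub_le_of_norm_hasFDerivWithin_le (𝕜 := ℝ) (fun z hz =>
    (differentiableAt_of_contDiffOn_closure h.isOpen hu hz.1).hasFDerivAt.hasFDerivWithinAt)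
    (fun z hz => hR z hz.1 hz.2) hconv ⟨hq, hqI⟩ ⟨hp, hpI⟩).trans ?_
  exact mul_le_mul_of_nonneg_left (h.norm_sub_le hp hq) ((norm_nonneg _).trans (hR p hp hpI))

lemma abs_ubarFn_sub_le_of_norm_fderiv_le (h : ThinDomain m ε Ω)
    (hu : ContDiffOn ℝ 1 u (closure Ω)) {I : Set ℝ} (hI : Convex ℝ I)
    (hR : ∀ p ∈ Ω, p 0 ∈ I → ‖fderiv ℝ u p‖ ≤ R) (hx : x ∈ Ioo (0 : ℝ) 1) (hxI : x ∈ I)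
    (hp : p ∈ Ω) (hpI : p 0 ∈ I) : |ubarFn Ω u x - u p| ≤ R * (|x - p 0| + 2 * ε) :=
  h.abs_ubarFn_sub_le (h.bddContinuousOn hu.continuousOn) hx fun _ hy =>
    h.abs_sub_le_of_norm_fderiv_le hu hI hR hy hxI hp hpI

lemma abs_ubarFn_sub_ubarFn_le (h : ThinDomain m ε Ω) (hu : ContDiffOn ℝ 1 u (closure Ω))
    (hR : ∀ p ∈ Ω, ‖fderiv ℝ u p‖ ≤ R) (hx : x ∈ Ioo (0 : ℝ) 1) (ht : t ∈ Ioo (0 : ℝ) 1) :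
    |ubarFn Ω u x - ubarFn Ω u t| ≤ R * (|x - t| + 2 * ε) := by
  rw [abs_sub_comm]
  refine h.abs_ubarFn_sub_le (h.bddContinuousOn hu.continuousOn) ht fun y hy => ?_
  rw [abs_sub_comm]
  exact h.abs_ubarFn_sub_le_of_norm_fderiv_le hu convex_univ (fun p hp _ => hR p hp) hx
    (mem_univ _) hy (mem_univ _)

lemma ubarFn_add_mul (h : ThinDomain m ε Ω) (hu : BddContinuousOn u Ω) (hv : BddContinuousOn v Ω)
    (t x : ℝ) : ubarFn Ω (fun p => u p + t * v p) x = ubarFn Ω u x + t * ubarFn Ω v x := by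
  simp only [ubarFn]
  rw [integral_add (h.integrableOn_cross hu x) ((h.integrableOn_cross hv x).const_mul t),
    integral_const_mul]
  ring

section Slope

variable {ρ : ℝ} {z : EuclideanSpace ℝ (Fin m)}

lemma image_cross_subset (h : ThinDomain m ε Ω) (ht : 0 ≤ t) (htx : 2 * t < 1 - x)
    (hz : z ∈ cross Ω ((1 + x) / 2)) :
    AffineMap.homothety z (sectionRatio x t) '' cross Ω x ⊆ cross Ω (x + t) := by
  have hx : 0 < 1 - x := by linarith
  have hxt : x + t = (1 - 2 * t / (1 - x)) * x + 2 * t / (1 - x) * ((1 + x) / 2) := by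
    rw [← sub_eq_zero]
    field_simp
    ring
  rw [hxt]
  exact h.homothety_image_cross_subset (div_nonneg (by linarith) hx.le)
    ((div_le_one hx).2 htx.le) hz

lemma sectionRatio_pos (htx : 2 * t < 1 - x) (hx : x < 1) : 0 < sectionRatio x t :=
  sub_pos.2 ((div_lt_one (sub_pos.2 hx)).2 htx)

lemma pow_mul_ωvol_add_le (h : ThinDomain m ε Ω) (hρx : ρ ≤ x) (hx : x < 1) (ht : 0 < t)
    (htρ : 2 * t < ρ) : (1 - 2 * t / ρ) ^ m * ωvol Ω (x + t) ≤ ωvol Ω x := by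
  have hρ : 0 < ρ := by linarith
  have hd : 0 < x / 2 + t := by linarith
  have hcancel : t / (x / 2 + t) * (x / 2 + t) = t := div_mul_cancel₀ t hd.ne'
  have hpt : (1 - t / (x / 2 + t)) * (x + t) + t / (x / 2 + t) * (x / 2) = x := by
    linear_combination -hcancel
  have hvol := h.pow_mul_ωvol_le (s := x + t) (r := x / 2) (θ := t / (x / 2 + t))
    (div_nonneg ht.le hd.le) ((div_le_one hd).2 (by linarith)) ⟨by linarith, by linarith⟩
  rw [hpt] at hvol
  have hθ : 1 - 2 * t / ρ ≤ 1 - t / (x / 2 + t) := by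
    rw [sub_le_sub_iff_left, div_le_div_iff₀ hd hρ]
    nlinarith
  exact (mul_le_mul_of_nonneg_right (pow_le_pow_left₀
    (sub_nonneg.2 ((div_le_one hρ).2 htρ.le)) hθ m) ENNReal.toReal_nonneg).trans hvol

lemma one_sub_le_pow_mul_ωvol_div (h : ThinDomain m ε Ω) (hρx : ρ ≤ x) (hρx' : ρ ≤ 1 - x)
    (ht : 0 < t) (htρ : 2 * t < ρ) :
    1 - m * (4 * t / ρ) ≤ sectionRatio x t ^ m * ωvol Ω x / ωvol Ω (x + t) := by
  have hρ : 0 < ρ := by linarith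
  have hθ : 1 - 2 * t / ρ ≤ sectionRatio x t := by
    rw [sectionRatio, sub_le_sub_iff_left]
    gcongr
  have hθ0 : 0 ≤ 1 - 2 * t / ρ := sub_nonneg.2 ((div_le_one hρ).2 htρ.le)
  have hω := h.ωvol_pos (x := x + t) ⟨by linarith, by linarith⟩
  have hbernoulli : 1 - m * (4 * t / ρ) ≤ ((1 - 2 * t / ρ) * (1 - 2 * t / ρ)) ^ m := by
    calc 1 - m * (4 * t / ρ) = 1 + m * ((1 - 2 * t / ρ) ^ 2 - 1 - (2 * t / ρ) ^ 2) := by ring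
      _ ≤ 1 + m * ((1 - 2 * t / ρ) ^ 2 - 1) := by
          gcongr 1 + m * ?_
          linarith [sq_nonneg (2 * t / ρ)]
      _ ≤ (1 + ((1 - 2 * t / ρ) ^ 2 - 1)) ^ m :=
          one_add_mul_le_pow (by linarith [sq_nonneg (1 - 2 * t / ρ)]) m
      _ = _ := by ring
  rw [le_div_iff₀ hω]
  calc (1 - m * (4 * t / ρ)) * ωvol Ω (x + t)
      ≤ (1 - 2 * t / ρ) ^ m * ((1 - 2 * t / ρ) ^ m * ωvol Ω (x + t)) := by
        rw [← mul_assoc, ← mul_pow]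
        exact mul_le_mul_of_nonneg_right hbernoulli hω.le
    _ ≤ sectionRatio x t ^ m * ωvol Ω x :=
        mul_le_mul (pow_le_pow_left₀ hθ0 hθ m)
          (h.pow_mul_ωvol_add_le hρx (by linarith) ht htρ) (by positivity)
          (pow_nonneg (hθ0.trans hθ) m)

lemma abs_ubarFn_sub_setAverage_le (h : ThinDomain m ε Ω) (hu : ContDiffOn ℝ 1 u (closure Ω))
    (hρx : ρ ≤ x) (hρx' : ρ ≤ 1 - x) (ht : 0 < t) (htρ : 2 * t < ρ)
    (hz : z ∈ cross Ω ((1 + x) / 2)) (hR0 : 0 ≤ R)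
    (hR : ∀ p ∈ Ω, p 0 = x + t → ‖fderiv ℝ u p‖ ≤ R) :
    |ubarFn Ω u (x + t) -
        ⨍ y in cross Ω x, u (mkPt m (x + t) (AffineMap.homothety z (sectionRatio x t) y))| ≤
      m * (4 * t / ρ) * (R * (2 * ε)) := by
  have hr : sectionRatio x t ≠ 0 := (sectionRatio_pos (by linarith) (by linarith)).ne'
  have hvol : volume.real (AffineMap.homothety z (sectionRatio x t) '' cross Ω x) =
      sectionRatio x t ^ m * ωvol Ω x :=
    volume_real_homothety_image_cross ((div_le_one (by linarith)).2 (by linarith)) z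
  rw [← setAverage_image_homothety (h.isOpen_cross x).measurableSet z hr
    fun y => u (mkPt m (x + t) y), ubarFn_eq_setAverage]
  refine (abs_setAverage_sub_setAverage_le ?_ (h.isOpen_cross _).measurableSet
    (h.image_cross_subset ht.le (by linarith) hz) ?_ (h.volume_cross_ne_top _)
    (h.integrableOn_cross (h.bddContinuousOn hu.continuousOn) _) (O := R * (2 * ε))
    fun y hy y' hy' => ?_).trans ?_
  · exact (AffineMap.homothety_isOpenMap z _ hr _ (h.isOpen_cross x)).measurableSet
  · exact ((AffineMap.homothety_isOpenMap z _ hr _ (h.isOpen_cross x)).measure_pos volume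
      ((h.nonempty x ⟨by linarith, by linarith⟩).image _)).ne'
  · simpa using h.abs_sub_le_of_norm_fderiv_le hu (convex_singleton (x + t)) hR hy rfl hy' rfl
  · refine mul_le_mul_of_nonneg_right ?_ (mul_nonneg hR0 (by linarith [h.eps_pos]))
    rw [hvol, sub_le_comm]
    exact h.one_sub_le_pow_mul_ωvol_div hρx hρx' ht htρ

lemma abs_sub_add_mul_fderiv_le (h : ThinDomain m ε Ω) (hρ : 0 < ρ) (hερ : ε ≤ ρ)
    (hρx' : ρ ≤ 1 - x) (ht : 0 < t) {y : EuclideanSpace ℝ (Fin m)} (hy : y ∈ cross Ω x)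
    (hz : z ∈ cross Ω ((1 + x) / 2)) {η : ℝ} (hη : 0 ≤ η)
    (hp : p = mkPt m x y) (hR : ‖fderiv ℝ u p‖ ≤ R)
    (hq : q = mkPt m (x + t) (AffineMap.homothety z (sectionRatio x t) y))
    (htaylor : ‖q - p‖ ≤ 5 * t → |u q - u p - fderiv ℝ u p (q - p)| ≤ η * ‖q - p‖) :
    |u q - (u p + t * fderiv ℝ u p (EuclideanSpace.single 0 1))| ≤
      t * (4 * ε / ρ * R + 5 * η) := by
  have := h.eps_pos
  set w := (2 * t / (1 - x)) • (z - y) with hw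
  have hw_le : ‖w‖ ≤ 4 * ε / ρ * t := by
    have hzy : ‖z - y‖ ≤ 2 * ε := by
      linarith [_root_.norm_sub_le z y, h.norm_lt hz, h.norm_lt hy]
    rw [hw, norm_smul, Real.norm_of_nonneg (div_nonneg (by linarith) (by linarith))]
    calc 2 * t / (1 - x) * ‖z - y‖ ≤ 2 * t / ρ * (2 * ε) := by gcongr
      _ = 4 * ε / ρ * t := by ring
  have hqp : q - p = t • EuclideanSpace.single 0 1 + mkPt m 0 w := by
    rw [hp, hq, mkPt_sub_mkPt, add_sub_cancel_left, mkPt_eq_smul_single_add]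
    congr 2
    rw [AffineMap.homothety_eq_lineMap, AffineMap.lineMap_apply_module, sectionRatio, hw]
    module
  have hw5 : ‖w‖ ≤ 4 * t := hw_le.trans (mul_le_mul_of_nonneg_right
    (by rw [div_le_iff₀ hρ]; linarith) ht.le)
  have hmk : ‖mkPt m 0 w‖ ≤ ‖w‖ := by simpa using norm_mkPt_le 0 w
  have hnorm : ‖q - p‖ ≤ 5 * t := by
    have hle := norm_add_le (t • (EuclideanSpace.single 0 1 : EuclideanSpace ℝ (Fin (m + 1))))
      (mkPt m 0 w)
    rw [norm_smul, PiLp.norm_single, norm_one, Real.norm_of_nonneg ht.le] at hle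
    rw [hqp]
    linarith
  have hvert : |fderiv ℝ u p (mkPt m 0 w)| ≤ R * (4 * ε / ρ * t) :=
    ((fderiv ℝ u p).le_opNorm _).trans
      (mul_le_mul hR (hmk.trans hw_le) (norm_nonneg _) ((norm_nonneg _).trans hR))
  have hrem := (htaylor hnorm).trans (mul_le_mul_of_nonneg_left hnorm hη)
  rw [hqp, map_add, map_smul, smul_eq_mul] at hrem
  rw [abs_le] at hvert hrem ⊢
  constructor <;> linarith [hvert.1, hvert.2, hrem.1, hrem.2]

end Slope

end ThinDomain

/-- The cross-sectional average of the axial derivative `∂u/∂x`. -/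
def axialSlope {m : ℕ} (Ω : Set (EuclideanSpace ℝ (Fin (m + 1))))
    (u : EuclideanSpace ℝ (Fin (m + 1)) → ℝ) : ℝ → ℝ :=
  ubarFn Ω fun p => fderiv ℝ u p (EuclideanSpace.single 0 1)

/-- A primitive of the averaged axial derivative `f`, equal to the cross-sectional average `ū` at
`1/2`. It is the regular replacement for `ū` in the comparison of `ū` with solutions of the
weighted equation. -/
def axialPrimitive {m : ℕ} (Ω : Set (EuclideanSpace ℝ (Fin (m + 1))))
    (u : EuclideanSpace ℝ (Fin (m + 1)) → ℝ) (x : ℝ) : ℝ :=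
  ubarFn Ω u 2⁻¹ + ∫ t in (2⁻¹ : ℝ)..x, axialSlope Ω u t

namespace ThinDomain

variable {m : ℕ} {ε L x a b : ℝ} {Ω : Set (EuclideanSpace ℝ (Fin (m + 1)))}
  {u : EuclideanSpace ℝ (Fin (m + 1)) → ℝ}

lemma bddContinuousOn_fderiv_single (h : ThinDomain m ε Ω) (hu : ContDiffOn ℝ 1 u (closure Ω)) :
    BddContinuousOn (fun p => fderiv ℝ u p (EuclideanSpace.single 0 1)) Ω :=
  bddContinuousOn_comp_fderiv h.isOpen h.convex h.isCompact_closure hu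
    (F := fun A => A (EuclideanSpace.single 0 1)) (by fun_prop)

lemma bddContinuousOn_axialSlope (h : ThinDomain m ε Ω) (hu : ContDiffOn ℝ 1 u (closure Ω)) :
    BddContinuousOn (axialSlope Ω u) (Ioo 0 1) :=
  h.bddContinuousOn_ubarFn (h.bddContinuousOn_fderiv_single hu)

lemma abs_axialSlope_le (h : ThinDomain m ε Ω) (hu : ContDiffOn ℝ 1 u (closure Ω))
    (hL : ∀ p ∈ Ω, ‖fderiv ℝ u p‖ ≤ L) (hx : x ∈ Ioo (0 : ℝ) 1) : |axialSlope Ω u x| ≤ L := by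
  rw [← sub_zero (axialSlope Ω u x)]
  refine h.abs_ubarFn_sub_le (h.bddContinuousOn_fderiv_single hu) hx fun y hy => ?_
  rw [sub_zero]
  refine ((fderiv ℝ u (mkPt m x y)).le_opNorm _).trans ?_
  simpa using hL _ hy

/-- `Ω(x + t)` is compared with the image of `Ω(x)` under a homothety, and `u` on that image with
its first-order expansion on `Ω(x)`. -/
lemma abs_ubarFn_add_sub_le (h : ThinDomain m ε Ω) (hu : ContDiffOn ℝ 1 u (closure Ω))
    {ρ t R η : ℝ} (hερ : ε ≤ ρ) (hρx : ρ ≤ x) (hρx' : ρ ≤ 1 - x) (ht : 0 < t) (htρ : 2 * t < ρ)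
    (hη : 0 ≤ η) (hR : ∀ p ∈ Ω, p 0 ∈ Icc x (x + t) → ‖fderiv ℝ u p‖ ≤ R)
    (htaylor : ∀ p ∈ Ω, ∀ q ∈ Ω, ‖q - p‖ ≤ 5 * t →
      |u q - u p - fderiv ℝ u p (q - p)| ≤ η * ‖q - p‖) :
    |ubarFn Ω u (x + t) - ubarFn Ω u x - t * axialSlope Ω u x| ≤
      t * ((8 * m + 4) * ε / ρ * R + 5 * η) := by
  have hρ : 0 < ρ := h.eps_pos.trans_le hερ
  have hx : x ∈ Ioo (0 : ℝ) 1 := ⟨by linarith, by linarith⟩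
  obtain ⟨z, hz⟩ := h.nonempty ((1 + x) / 2) ⟨by linarith, by linarith⟩
  obtain ⟨y₀, hy₀⟩ := h.nonempty x hx
  have hmap : ∀ y ∈ cross Ω x, AffineMap.homothety z (sectionRatio x t) y ∈ cross Ω (x + t) :=
    fun y hy => h.image_cross_subset ht.le (by linarith) hz (mem_image_of_mem _ hy)
  have hR0 : 0 ≤ R := (norm_nonneg _).trans (hR _ hy₀ ⟨le_rfl, by simp [ht.le]⟩)
  have hubdd := h.bddContinuousOn hu.continuousOn
  have hdbdd := h.bddContinuousOn_fderiv_single hu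
  have hvol := h.abs_ubarFn_sub_setAverage_le hu hρx hρx' ht htρ hz hR0 fun p hp hpx =>
    hR p hp ⟨by linarith, hpx.le⟩
  have hexp : |(⨍ y in cross Ω x, u (mkPt m (x + t) (AffineMap.homothety z (sectionRatio x t) y)))
      - ubarFn Ω (fun p => u p + t * fderiv ℝ u p (EuclideanSpace.single 0 1)) x| ≤
      t * (4 * ε / ρ * R + 5 * η) := by
    rw [ubarFn_eq_setAverage]
    refine abs_setAverage_sub_setAverage_le_of_forall (h.volume_cross_ne_zero hx)
      (h.volume_cross_ne_top x)
      (((bddContinuousOn_cross hubdd (x + t)).comp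
        (AffineMap.homothety_continuous z _).continuousOn hmap).integrableOn
        (h.isOpen_cross x).measurableSet (h.volume_cross_ne_top x).lt_top)
      (h.integrableOn_cross (hubdd.add ((BddContinuousOn.const t).mul hdbdd)) x)
      fun y hy => ?_
    exact h.abs_sub_add_mul_fderiv_le hρ hερ hρx' ht hy hz hη rfl
      (hR _ hy ⟨le_rfl, by simp [ht.le]⟩) rfl fun hle => htaylor _ hy _ (hmap y hy) hle
  rw [h.ubarFn_add_mul hubdd hdbdd] at hexp
  calc |ubarFn Ω u (x + t) - ubarFn Ω u x - t * axialSlope Ω u x| ≤ _ := by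
        rw [sub_sub]
        exact abs_sub_le _ _ _
    _ ≤ _ := add_le_add hvol hexp
    _ = t * ((8 * m + 4) * ε / ρ * R + 5 * η) := by ring

lemma eventually_abs_ubarFn_sub_le (h : ThinDomain m ε Ω) (hu : ContDiffOn ℝ 1 u (closure Ω))
    (hL0 : 0 < L) (hL : ∀ p ∈ Ω, ‖fderiv ℝ u p‖ ≤ L * max (min (p 0) (1 - p 0)) ε)
    (hx : x ∈ Icc ε (1 - ε)) :
    ∀ᶠ x' in 𝓝[>] x, |ubarFn Ω u x' - ubarFn Ω u x - (x' - x) * axialSlope Ω u x| ≤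
      (16 * m + 13) * L * ε * (x' - x) := by
  obtain ⟨ρ, hρ⟩ : ∃ ρ, ρ = min x (1 - x) := ⟨_, rfl⟩
  have hερ : ε ≤ ρ := hρ ▸ le_min hx.1 (by linarith [hx.2])
  have hρ0 : 0 < ρ := h.eps_pos.trans_le hερ
  obtain ⟨δ, hδ, htaylor⟩ := exists_forall_abs_sub_sub_fderiv_le h.isOpen h.convex
    h.isCompact_closure hu (mul_pos hL0 h.eps_pos)
  filter_upwards [Ioo_mem_nhdsGT (show x < x + min (ρ / 2) (δ / 5) by
    simp only [lt_add_iff_pos_right]; positivity)] with x' hx'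
  obtain ⟨t, rfl⟩ : ∃ t, x' = x + t := ⟨x' - x, by ring⟩
  have ht : 0 < t := by linarith [hx'.1]
  have htρ : t < ρ / 2 := by linarith [hx'.2, min_le_left (ρ / 2) (δ / 5)]
  have htδ : t < δ / 5 := by linarith [hx'.2, min_le_right (ρ / 2) (δ / 5)]
  have hR : ∀ p ∈ Ω, p 0 ∈ Icc x (x + t) → ‖fderiv ℝ u p‖ ≤ L * (2 * ρ) := fun p hp hpx => by
    refine (hL p hp).trans (mul_le_mul_of_nonneg_left (max_le ?_ (by linarith)) hL0.le)
    rcases min_choice x (1 - x) with hmin | hmin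
    · exact (min_le_left _ _).trans (by linarith [hpx.2])
    · exact (min_le_right _ _).trans (by linarith [hpx.1])
  have hmain := h.abs_ubarFn_add_sub_le hu hερ (hρ ▸ min_le_left _ _) (hρ ▸ min_le_right _ _) ht
    (by linarith) (mul_nonneg hL0.le h.eps_pos.le) hR
    fun p hp q hq hle => htaylor p hp q hq (by linarith)
  rw [add_sub_cancel_left]
  refine hmain.trans_eq ?_
  field_simp
  ring

lemma hasDerivAt_axialPrimitive (h : ThinDomain m ε Ω) (hu : ContDiffOn ℝ 1 u (closure Ω))
    (hx : x ∈ Ioo (0 : ℝ) 1) : HasDerivAt (axialPrimitive Ω u) (axialSlope Ω u x) x :=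
  ((h.bddContinuousOn_axialSlope hu).hasDerivAt_integral (by norm_num) hx).const_add _

lemma continuousOn_axialPrimitive (h : ThinDomain m ε Ω) (hu : ContDiffOn ℝ 1 u (closure Ω)) :
    ContinuousOn (axialPrimitive Ω u) (Icc 0 1) :=
  continuousOn_const.add ((h.bddContinuousOn_axialSlope hu).continuousOn_integral (by norm_num))

lemma abs_axialPrimitive_sub_le (h : ThinDomain m ε Ω) (hu : ContDiffOn ℝ 1 u (closure Ω))
    (hL : ∀ p ∈ Ω, ‖fderiv ℝ u p‖ ≤ L) (ha : a ∈ Icc (0 : ℝ) 1) (hb : b ∈ Icc (0 : ℝ) 1) :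
    |axialPrimitive Ω u a - axialPrimitive Ω u b| ≤ L * |a - b| := by
  have hf := h.bddContinuousOn_axialSlope hu
  have hhalf : (2⁻¹ : ℝ) ∈ Icc (0 : ℝ) 1 := by norm_num
  rw [axialPrimitive, axialPrimitive, add_sub_add_left_eq_sub,
    intervalIntegral.integral_interval_sub_left (hf.intervalIntegrable hhalf ha)
      (hf.intervalIntegrable hhalf hb)]
  refine intervalIntegral.norm_integral_le_of_norm_le_const_ae (f := axialSlope Ω u) ?_
  filter_upwards [Measure.ae_ne volume (1 : ℝ)] with t ht1 ht
  exact h.abs_axialSlope_le hu hL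
    ⟨(le_min hb.1 ha.1).trans_lt ht.1, (ht.2.trans (max_le hb.2 ha.2)).lt_of_ne ht1⟩

lemma eventually_abs_ubarFn_sub_axialPrimitive_le (h : ThinDomain m ε Ω)
    (hu : ContDiffOn ℝ 1 u (closure Ω)) (hL0 : 0 < L)
    (hL : ∀ p ∈ Ω, ‖fderiv ℝ u p‖ ≤ L * max (min (p 0) (1 - p 0)) ε)
    (hx : x ∈ Icc ε (1 - ε)) :
    ∀ᶠ x' in 𝓝[>] x,
      |ubarFn Ω u x' - axialPrimitive Ω u x' - (ubarFn Ω u x - axialPrimitive Ω u x)| ≤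
        (16 * m + 14) * L * ε * (x' - x) := by
  have hε := h.eps_pos
  have hU := (hasDerivAt_iff_isLittleO.1 (h.hasDerivAt_axialPrimitive hu
    ⟨hε.trans_le hx.1, by linarith [hx.2]⟩)).def (mul_pos hL0 hε)
  filter_upwards [h.eventually_abs_ubarFn_sub_le hu hL0 hL hx, nhdsWithin_le_nhds hU,
    self_mem_nhdsWithin]
    with x' hu' hU' hlt
  rw [smul_eq_mul, Real.norm_eq_abs, Real.norm_of_nonneg (sub_nonneg.2 (le_of_lt hlt))] at hU'
  rw [abs_le] at hu' hU' ⊢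
  constructor <;> linarith [hu'.1, hu'.2, hU'.1, hU'.2]

lemma abs_ubarFn_sub_axialPrimitive_le_of_mem_Icc (h : ThinDomain m ε Ω)
    (hu : ContDiffOn ℝ 1 u (closure Ω)) (hL0 : 0 < L)
    (hL : ∀ p ∈ Ω, ‖fderiv ℝ u p‖ ≤ L * max (min (p 0) (1 - p 0)) ε) (hε : ε ≤ 1 / 2)
    (hx : x ∈ Icc ε (1 - ε)) :
    |ubarFn Ω u x - axialPrimitive Ω u x| ≤ (16 * m + 14) * L * ε := by
  have hε0 := h.eps_pos
  have hcont : ContinuousOn (fun x => ubarFn Ω u x - axialPrimitive Ω u x) (Icc ε (1 - ε)) :=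
    ((h.bddContinuousOn_ubarFn (h.bddContinuousOn hu.continuousOn)).1.sub
      ((h.continuousOn_axialPrimitive hu).mono Ioo_subset_Icc_self)).mono fun t ht =>
        ⟨hε0.trans_le ht.1, by linarith [ht.2]⟩
  have hlip : ∀ {a b}, a ∈ Icc ε (1 - ε) → b ∈ Icc ε (1 - ε) → a ≤ b →
      |ubarFn Ω u b - axialPrimitive Ω u b - (ubarFn Ω u a - axialPrimitive Ω u a)| ≤
        (16 * m + 14) * L * ε * (b - a) := fun ha hb hab =>
    abs_sub_le_of_eventually_abs_sub_le hab (hcont.mono (Icc_subset_Icc ha.1 hb.2)) fun t ht =>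
      h.eventually_abs_ubarFn_sub_axialPrimitive_le hu hL0 hL ⟨ha.1.trans ht.1, ht.2.le.trans hb.2⟩
  have hhalf : (2⁻¹ : ℝ) ∈ Icc ε (1 - ε) := ⟨by linarith, by linarith⟩
  have hzero : ubarFn Ω u 2⁻¹ - axialPrimitive Ω u 2⁻¹ = 0 := by simp [axialPrimitive]
  have hK : 0 ≤ (16 * m + 14) * L * ε := by positivity
  rcases le_total 2⁻¹ x with hle | hle
  · have := hlip hhalf hx hle
    rw [hzero, sub_zero] at this
    exact this.trans (mul_le_of_le_one_right hK (by linarith [hx.2]))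
  · have := hlip hx hhalf hle
    rw [hzero, zero_sub, abs_neg] at this
    exact this.trans (mul_le_of_le_one_right hK (by linarith [hx.1]))

lemma norm_fderiv_le_of_le_mul_max (h : ThinDomain m ε Ω) (hL0 : 0 ≤ L)
    (hL : ∀ p ∈ Ω, ‖fderiv ℝ u p‖ ≤ L * max (min (p 0) (1 - p 0)) ε) (hε : ε ≤ 1)
    {p : EuclideanSpace ℝ (Fin (m + 1))} (hp : p ∈ Ω) : ‖fderiv ℝ u p‖ ≤ L :=
  (hL p hp).trans <| mul_le_of_le_one_right hL0 <|
    max_le ((min_le_left _ _).trans (h.mem_Ioo hp).2.le) hε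

lemma abs_ubarFn_sub_axialPrimitive_le (h : ThinDomain m ε Ω)
    (hu : ContDiffOn ℝ 1 u (closure Ω)) (hL0 : 0 < L)
    (hL : ∀ p ∈ Ω, ‖fderiv ℝ u p‖ ≤ L * max (min (p 0) (1 - p 0)) ε) (hε : ε ≤ 1 / 2)
    (hx : x ∈ Ioo (0 : ℝ) 1) :
    |ubarFn Ω u x - axialPrimitive Ω u x| ≤ (16 * m + 18) * L * ε := by
  have hε0 := h.eps_pos
  have hL1 : ∀ p ∈ Ω, ‖fderiv ℝ u p‖ ≤ L := fun _ =>
    h.norm_fderiv_le_of_le_mul_max hL0.le hL (by linarith)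
  obtain ⟨t, ht, hxt⟩ : ∃ t ∈ Icc ε (1 - ε), |x - t| ≤ ε := by
    refine ⟨max ε (min x (1 - ε)), ⟨le_max_left _ _, max_le (by linarith) (min_le_right _ _)⟩, ?_⟩
    rw [abs_le]
    rcases le_total x (1 - ε) with h1 | h1 <;> rcases le_total ε x with h2 | h2 <;>
      simp only [min_eq_left, min_eq_right, max_eq_left, max_eq_right, h1, h2,
        show ε ≤ 1 - ε by linarith] <;>
      constructor <;> linarith [hx.1, hx.2]
  have ht1 : t ∈ Ioo (0 : ℝ) 1 := ⟨hε0.trans_le ht.1, by linarith [ht.2]⟩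
  have hmid := h.abs_ubarFn_sub_axialPrimitive_le_of_mem_Icc hu hL0 hL hε ht
  have hubar := (h.abs_ubarFn_sub_ubarFn_le hu hL1 hx ht1).trans
    (mul_le_mul_of_nonneg_left (add_le_add_left hxt _) hL0.le)
  have hU := (h.abs_axialPrimitive_sub_le hu hL1 (Ioo_subset_Icc_self hx)
    (Ioo_subset_Icc_self ht1)).trans (mul_le_mul_of_nonneg_left hxt hL0.le)
  rw [abs_le] at hmid hubar hU ⊢
  constructor <;> linarith [hmid.1, hmid.2, hubar.1, hubar.2, hU.1, hU.2]

end ThinDomain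

/-- The Poincaré inequality with constant `lam` on `Ω`, tested on functions smooth up to the
boundary; the term `(∫ w)² / |Ω|` is the contribution of the mean of `w`. -/
def DomainPoincare {k : ℕ} (Ω : Set (EuclideanSpace ℝ (Fin k))) (lam : ℝ) : Prop :=
  ∀ w : EuclideanSpace ℝ (Fin k) → ℝ, ContDiffOn ℝ (⊤ : ℕ∞) w (closure Ω) →
    lam * ((∫ p in Ω, w p ^ 2) - (∫ p in Ω, w p) ^ 2 / volume.real Ω) ≤
      ∫ p in Ω, ‖gradient w p‖ ^ 2

lemma integral_add_mul_add_sq_mul {X : Type*} [MeasurableSpace X] {ν : Measure X} {a b c : X → ℝ}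
    (ha : Integrable a ν) (hb : Integrable b ν) (hc : Integrable c ν) (t : ℝ) :
    ∫ x, (a x + t * b x + t ^ 2 * c x) ∂ν =
      ∫ x, a x ∂ν + t * ∫ x, b x ∂ν + t ^ 2 * ∫ x, c x ∂ν := by
  have hab : Integrable (fun x => a x + t * b x) ν := ha.add (hb.const_mul t)
  rw [integral_add hab (hc.const_mul _), integral_add ha (hb.const_mul t), integral_const_mul,
    integral_const_mul]

lemma integral_sub_average_sq {X : Type*} [MeasurableSpace X] {ν : Measure X} [IsFiniteMeasure ν]
    {w : X → ℝ} (hw : Integrable w ν) (hw2 : Integrable (fun x => w x ^ 2) ν) :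
    ∫ x, (w x - ⨍ y, w y ∂ν) ^ 2 ∂ν = ∫ x, w x ^ 2 ∂ν - (∫ x, w x ∂ν) ^ 2 / ν.real univ := by
  have havg := measure_smul_average ν w
  rw [smul_eq_mul] at havg
  have hexp := integral_add_mul_add_sq_mul hw2 (hw.const_mul 2) (integrable_const 1)
    (-⨍ y, w y ∂ν)
  rw [integral_const_mul, integral_const, smul_eq_mul] at hexp
  calc ∫ x, (w x - ⨍ y, w y ∂ν) ^ 2 ∂ν
      = ∫ x, (w x ^ 2 + -(⨍ y, w y ∂ν) * (2 * w x) + (-⨍ y, w y ∂ν) ^ 2 * 1) ∂ν :=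
        integral_congr_ae (.of_forall fun x => by ring)
    _ = ∫ x, w x ^ 2 ∂ν - ν.real univ * (⨍ y, w y ∂ν) ^ 2 := by
        rw [hexp, ← havg]
        ring
    _ = ∫ x, w x ^ 2 ∂ν - (∫ x, w x ∂ν) ^ 2 / ν.real univ := by
        rw [← havg, mul_pow, mul_div_right_comm, pow_two (ν.real univ), mul_self_div_self]

lemma domainPoincare_of_eq_sInf {k : ℕ} {Ω : Set (EuclideanSpace ℝ (Fin k))} {lam : ℝ}
    (hΩ : IsOpen Ω) (hcomp : IsCompact (closure Ω))
    (hlam : lam = sInf {r | ∃ w : EuclideanSpace ℝ (Fin k) → ℝ,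
      ContDiffOn ℝ (⊤ : ℕ∞) w (closure Ω) ∧ (∃ p ∈ Ω, w p ≠ 0) ∧ (∫ p in Ω, w p) = 0 ∧
        r = (∫ p in Ω, ‖gradient w p‖ ^ 2) / (∫ p in Ω, (w p) ^ 2)}) :
    DomainPoincare Ω lam := by
  intro w hw
  have hfin : volume Ω < ⊤ := (measure_mono subset_closure).trans_lt hcomp.measure_lt_top
  have : Fact (volume Ω < ⊤) := ⟨hfin⟩
  have hbdd := (BddContinuousOn.of_isCompact hcomp hw.continuousOn).mono subset_closure
  have hint := hbdd.integrableOn hΩ.measurableSet hfin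
  have hsq := integral_sub_average_sq hint (hbdd.pow_two.integrableOn hΩ.measurableSet hfin)
  have hmean := integral_sub_average (volume.restrict Ω) w
  rw [measureReal_restrict_apply_univ] at hsq
  generalize ⨍ p in Ω, w p = a at hsq hmean
  have hgrad : ∀ p, gradient (fun p => w p - a) p = gradient w p := fun p => by
    simp only [gradient, fderiv_sub_const]
  have hnonneg : ∀ v : EuclideanSpace ℝ (Fin k) → ℝ, 0 ≤ ∫ p in Ω, v p ^ 2 := fun v =>
    integral_nonneg fun p => sq_nonneg (v p)
  rw [← hsq]
  rcases (hnonneg fun p => w p - a).eq_or_lt with h0 | hpos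
  · rw [← h0, mul_zero]
    exact hnonneg _
  · rw [← le_div_iff₀ hpos, hlam]
    refine csInf_le ⟨0, ?_⟩ ⟨fun p => w p - a, hw.sub contDiffOn_const, ?_, hmean, ?_⟩
    · rintro _ ⟨v, -, -, -, rfl⟩
      exact div_nonneg (hnonneg _) (hnonneg _)
    · by_contra! hzero
      rw [setIntegral_eq_zero_of_forall_eq_zero fun p hp => by
        rw [hzero p hp, zero_pow two_ne_zero]] at hpos
      exact hpos.false
    · simp only [hgrad]

/-- The lemma of du Bois-Reymond: the test function `1` gives `∫ G = 0`, and primitives of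
compactly supported functions then identify `F`. -/
lemma eq_neg_integral_of_forall_integral_deriv_mul_eq {F G : ℝ → ℝ} {a b : ℝ} (hab : a ≤ b)
    (hF : BddContinuousOn F (Ioo a b)) (hG : BddContinuousOn G (Ioo a b))
    (hweak : ∀ W : ℝ → ℝ, ContDiff ℝ (⊤ : ℕ∞) W →
      ∫ t in a..b, deriv W t * F t = ∫ t in a..b, W t * G t) :
    ∫ t in a..b, G t = 0 ∧ ∀ x ∈ Ioo a b, F x = -∫ t in a..x, G t := by
  have ha : a ∈ Icc a b := left_mem_Icc.2 hab
  have hb : b ∈ Icc a b := right_mem_Icc.2 hab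
  have hG0 : ∫ t in a..b, G t = 0 := by
    simpa using (hweak (fun _ => 1) contDiff_const).symm
  have hN : BddContinuousOn (fun x => ∫ t in a..x, G t) (Ioo a b) :=
    (BddContinuousOn.of_isCompact isCompact_Icc (hG.continuousOn_integral ha)).mono
      Ioo_subset_Icc_self
  have horth : ∀ g : ℝ → ℝ, ContDiff ℝ (⊤ : ℕ∞) g →
      ∫ x in a..b, g x * (F x + ∫ t in a..x, G t) = 0 := fun g hg => by
    have hgb : BddContinuousOn g (Ioo a b) :=
      (BddContinuousOn.of_isCompact isCompact_Icc hg.continuous.continuousOn).mono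
        Ioo_subset_Icc_self
    obtain ⟨hW, hWd⟩ := contDiff_const_add_integral hg a 0
    have hparts := intervalIntegral.integral_mul_deriv_eq_deriv_mul_of_hasDerivAt (a := a) (b := b)
      (u := fun x => 0 + ∫ t in a..x, g t) (v := fun x => ∫ t in a..x, G t) (u' := g) (v' := G)
      hW.continuous.continuousOn (by rw [uIcc_of_le hab]; exact hG.continuousOn_integral ha)
      (fun x _ => (hW.differentiable (by simp) x).hasDerivAt.congr_deriv (congrFun hWd x))
      (fun x hx => hG.hasDerivAt_integral ha (by rwa [min_eq_left hab, max_eq_right hab] at hx))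
      (hgb.intervalIntegrable ha hb) (hG.intervalIntegrable ha hb)
    have hFW := hweak _ hW
    rw [hWd, hparts, hG0] at hFW
    simp only [intervalIntegral.integral_same, mul_zero, sub_zero, zero_sub] at hFW
    simp only [mul_add]
    rw [intervalIntegral.integral_add ((hgb.mul hF).intervalIntegrable ha hb)
      ((hgb.mul hN).intervalIntegrable ha hb), hFW, neg_add_cancel]
  have hae := isOpen_Ioo.ae_eq_zero_of_integral_contDiff_smul_eq_zero (U := Ioo a b) (μ := volume)
    (f := fun x => F x + ∫ t in a..x, G t)
    ((hF.add hN).1.locallyIntegrableOn measurableSet_Ioo) fun g hg _ hsupp => by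
      rw [← horth g hg, intervalIntegral.integral_of_le hab, integral_Ioc_eq_integral_Ioo]
      refine (setIntegral_eq_integral_of_forall_compl_eq_zero fun x hx => ?_).symm
      rw [image_eq_zero_of_notMem_tsupport fun hx' => hx (hsupp hx'), zero_smul]
  have heq := Measure.eqOn_open_of_ae_eq (μ := volume) (g := fun _ => (0 : ℝ))
    ((ae_restrict_iff' measurableSet_Ioo).2 hae) isOpen_Ioo (hF.add hN).1 continuousOn_const
  exact ⟨hG0, fun x hx => eq_neg_of_add_eq_zero_left (heq hx)⟩

section Gradient

variable {m : ℕ} {W : ℝ → ℝ} {u : EuclideanSpace ℝ (Fin (m + 1)) → ℝ}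
  {p : EuclideanSpace ℝ (Fin (m + 1))} {W' : ℝ}

lemma norm_gradient (u : EuclideanSpace ℝ (Fin (m + 1)) → ℝ) (p : EuclideanSpace ℝ (Fin (m + 1))) :
    ‖gradient u p‖ = ‖fderiv ℝ u p‖ :=
  LinearIsometryEquiv.norm_map _ _

lemma hasGradientAt_comp_zero (hW : HasDerivAt W W' (p 0)) :
    HasGradientAt (fun p : EuclideanSpace ℝ (Fin (m + 1)) => W (p 0))
      (W' • EuclideanSpace.single 0 1) p := by
  rw [hasGradientAt_iff_hasFDerivAt]
  refine (hW.comp_hasFDerivAt p (EuclideanSpace.proj (𝕜 := ℝ) (0 : Fin (m + 1))).hasFDerivAt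
    ).congr_fderiv ?_
  ext v
  simp [EuclideanSpace.inner_single_left]

lemma norm_gradient_comp_zero_sq (hW : HasDerivAt W W' (p 0)) :
    ‖gradient (fun p : EuclideanSpace ℝ (Fin (m + 1)) => W (p 0)) p‖ ^ 2 = W' ^ 2 := by
  rw [(hasGradientAt_comp_zero hW).gradient, norm_smul, PiLp.norm_single, norm_one, mul_one,
    Real.norm_eq_abs, sq_abs]

lemma norm_gradient_add_mul_sq (hu : DifferentiableAt ℝ u p) (hW : HasDerivAt W W' (p 0)) (t : ℝ) :
    ‖gradient (fun p => u p + t * W (p 0)) p‖ ^ 2 = ‖gradient u p‖ ^ 2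
      + t * (2 * (W' * fderiv ℝ u p (EuclideanSpace.single 0 1))) + t ^ 2 * W' ^ 2 := by
  have hgrad : HasGradientAt (fun p => u p + t * W (p 0))
      (gradient u p + t • W' • EuclideanSpace.single 0 1) p := by
    have h₁ := hu.hasGradientAt
    have h₂ := hasGradientAt_comp_zero hW
    rw [hasGradientAt_iff_hasFDerivAt] at h₁ h₂ ⊢
    rw [map_add, map_smul]
    exact h₁.add (h₂.const_mul t)
  rw [hgrad.gradient, norm_add_sq_real, inner_smul_right, inner_smul_right, inner_gradient_left,
    norm_smul, norm_smul, PiLp.norm_single, norm_one, mul_one, mul_pow, Real.norm_eq_abs, sq_abs,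
    Real.norm_eq_abs, sq_abs]
  ring

end Gradient

namespace ThinDomain

variable {m : ℕ} {ε lam : ℝ} {Ω : Set (EuclideanSpace ℝ (Fin (m + 1)))}
  {u : EuclideanSpace ℝ (Fin (m + 1)) → ℝ} {W : ℝ → ℝ}

lemma ubarFn_one (h : ThinDomain m ε Ω) {x : ℝ} (hx : x ∈ Ioo (0 : ℝ) 1) :
    ubarFn Ω (fun _ => 1) x = 1 := by
  rw [← sub_eq_zero, ← abs_nonpos_iff]
  exact h.abs_ubarFn_sub_le (.const 1) hx fun y _ => by simp

lemma setIntegral_comp_zero (h : ThinDomain m ε Ω) (hW : ContinuousOn W (Icc 0 1)) :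
    ∫ p in Ω, W (p 0) = ∫ x in (0 : ℝ)..1, ωvol Ω x * W x := by
  have hmul := h.setIntegral_mul_eq hW (.const 1)
  simp only [mul_one] at hmul
  rw [hmul, intervalIntegral.integral_of_le zero_le_one,
    intervalIntegral.integral_of_le zero_le_one, integral_Ioc_eq_integral_Ioo,
    integral_Ioc_eq_integral_Ioo]
  exact setIntegral_congr_fun measurableSet_Ioo fun x hx => by
    simp only [h.ubarFn_one hx, mul_one]

lemma weightedPoincare (h : ThinDomain m ε Ω) (hP : DomainPoincare Ω lam) :
    WeightedPoincare (ωvol Ω) lam := by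
  intro W hW
  have hle := hP (fun p => W (p 0)) (hW.comp (contDiff_piLp_apply 2)).contDiffOn
  simp only [norm_gradient_comp_zero_sq (hW.differentiable (by simp) _).hasDerivAt] at hle
  have hvol := h.setIntegral_comp_zero (W := fun _ => 1) continuousOn_const
  simp only [mul_one, setIntegral_const, smul_eq_mul] at hvol
  rwa [hvol, h.setIntegral_comp_zero hW.continuous.continuousOn,
    h.setIntegral_comp_zero (W := fun t => W t ^ 2) (hW.continuous.pow 2).continuousOn,
    h.setIntegral_comp_zero (W := fun t => deriv W t ^ 2)
      ((hW.continuous_deriv (by simp)).pow 2).continuousOn] at hle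

/-- The first variation of the Rayleigh quotient at its minimizer `u`, in a direction depending on
the first coordinate only. -/
lemma setIntegral_deriv_mul_eq (h : ThinDomain m ε Ω) (hP : DomainPoincare Ω lam)
    (hu : ContDiffOn ℝ (⊤ : ℕ∞) u (closure Ω)) (hu0 : ∫ p in Ω, u p = 0)
    (heq : ∫ p in Ω, ‖gradient u p‖ ^ 2 = lam * ∫ p in Ω, u p ^ 2)
    (hW : ContDiff ℝ (⊤ : ℕ∞) W) :
    ∫ p in Ω, deriv W (p 0) * fderiv ℝ u p (EuclideanSpace.single 0 1) =
      lam * ∫ p in Ω, W (p 0) * u p := by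
  have hu1 : ContDiffOn ℝ 1 u (closure Ω) := hu.of_le (by simp)
  have hub := h.bddContinuousOn hu.continuousOn
  have hWb := h.bddContinuousOn_comp_zero hW.continuous.continuousOn
  have hW'b := h.bddContinuousOn_comp_zero (hW.continuous_deriv (by simp)).continuousOn
  have hgb := bddContinuousOn_comp_fderiv h.isOpen h.convex h.isCompact_closure hu1
    (F := fun A => ‖A‖ ^ 2) (by fun_prop)
  simp only [← norm_gradient] at hgb
  have hvar : ∀ t : ℝ, 0 ≤ ((∫ p in Ω, deriv W (p 0) ^ 2)
      - lam * ((∫ p in Ω, W (p 0) ^ 2) - (∫ p in Ω, W (p 0)) ^ 2 / volume.real Ω)) * (t * t)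
      + 2 * ((∫ p in Ω, deriv W (p 0) * fderiv ℝ u p (EuclideanSpace.single 0 1))
        - lam * ∫ p in Ω, W (p 0) * u p) * t + 0 := fun t => by
    have hle := hP (fun p => u p + t * W (p 0))
      (hu.add (contDiff_const.mul (hW.comp (contDiff_piLp_apply 2))).contDiffOn)
    rw [integral_add (h.integrableOn hub) ((h.integrableOn hWb).const_mul t), integral_const_mul,
      hu0, setIntegral_congr_fun h.isOpen.measurableSet fun p hp => norm_gradient_add_mul_sq
        (differentiableAt_of_contDiffOn_closure h.isOpen hu1 hp)
        (hW.differentiable (by simp) (p 0)).hasDerivAt t,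
      setIntegral_congr_fun h.isOpen.measurableSet fun p _ => show (u p + t * W (p 0)) ^ 2 =
        u p ^ 2 + t * (2 * (W (p 0) * u p)) + t ^ 2 * W (p 0) ^ 2 by ring,
      integral_add_mul_add_sq_mul (h.integrableOn hub.pow_two)
        ((h.integrableOn (hWb.mul hub)).const_mul 2) (h.integrableOn hWb.pow_two),
      integral_add_mul_add_sq_mul (h.integrableOn hgb)
        ((h.integrableOn (hW'b.mul (h.bddContinuousOn_fderiv_single hu1))).const_mul 2)
        (h.integrableOn hW'b.pow_two), integral_const_mul, integral_const_mul, heq] at hle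
    linear_combination hle
  have hdisc := discrim_le_zero hvar
  rw [discrim, mul_zero, sub_zero] at hdisc
  linarith [pow_eq_zero_iff two_ne_zero |>.1 (hdisc.antisymm (sq_nonneg _))]

lemma isFluxSolution (h : ThinDomain m ε Ω) (hP : DomainPoincare Ω lam)
    (hu : ContDiffOn ℝ (⊤ : ℕ∞) u (closure Ω)) (hu0 : ∫ p in Ω, u p = 0)
    (heq : ∫ p in Ω, ‖gradient u p‖ ^ 2 = lam * ∫ p in Ω, u p ^ 2) (hlam : lam ≠ 0) :
    IsFluxSolution (ωvol Ω) lam (ubarFn Ω u) (axialPrimitive Ω u) := by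
  have hu1 : ContDiffOn ℝ 1 u (closure Ω) := hu.of_le (by simp)
  have hub := h.bddContinuousOn hu.continuousOn
  have hωu := h.bddContinuousOn_ωvol.mul (h.bddContinuousOn_ubarFn hub)
  have hweak : ∀ W : ℝ → ℝ, ContDiff ℝ (⊤ : ℕ∞) W →
      ∫ t in (0 : ℝ)..1, deriv W t * (ωvol Ω t * axialSlope Ω u t) =
        ∫ t in (0 : ℝ)..1, W t * (lam * (ωvol Ω t * ubarFn Ω u t)) := fun W hW => by
    have hvar := h.setIntegral_deriv_mul_eq hP hu hu0 heq hW
    rw [h.setIntegral_mul_eq (hW.continuous_deriv (by simp)).continuousOn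
      (h.bddContinuousOn_fderiv_single hu1), h.setIntegral_mul_eq hW.continuous.continuousOn hub,
      ← intervalIntegral.integral_const_mul] at hvar
    simpa only [axialSlope, mul_left_comm] using hvar
  obtain ⟨hmean, hflux⟩ := eq_neg_integral_of_forall_integral_deriv_mul_eq zero_le_one
    (h.bddContinuousOn_ωvol.mul (h.bddContinuousOn_axialSlope hu1))
    ((BddContinuousOn.const lam).mul hωu) hweak
  simp only [intervalIntegral.integral_const_mul] at hmean hflux
  refine ⟨h.bddContinuousOn_ubarFn hub, h.continuousOn_axialPrimitive hu1, fun x hx => ?_,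
    (mul_eq_zero.1 hmean).resolve_left hlam⟩
  rw [← hflux x hx, mul_div_cancel_left₀ _ (h.ωvol_pos hx).ne']
  exact h.hasDerivAt_axialPrimitive hu1 hx

end ThinDomain

lemma abs_le_one_add_mul_sSup {X : Type*} {f : X → ℝ} {s : Set X} {B C : ℝ} {x : X}
    (hf : ∀ x ∈ s, |f x| ≤ B) (hC : 0 ≤ C) (hinf : -sInf (f '' s) ≤ C * sSup (f '' s))
    (hx : x ∈ s) : |f x| ≤ (1 + C) * sSup (f '' s) := by
  have hle : f x ≤ sSup (f '' s) :=
    le_csSup ⟨B, forall_mem_image.2 fun y hy => (abs_le.1 (hf y hy)).2⟩ (mem_image_of_mem f hx)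
  have hge : sInf (f '' s) ≤ f x :=
    csInf_le ⟨-B, forall_mem_image.2 fun y hy => (abs_le.1 (hf y hy)).1⟩ (mem_image_of_mem f hx)
  have hsup : 0 ≤ sSup (f '' s) :=
    nonneg_of_mul_nonneg_right (a := 1 + C) (by linarith) (by linarith)
  have hCsup : 0 ≤ C * sSup (f '' s) := mul_nonneg hC hsup
  exact abs_le.2 ⟨by linarith, by linarith⟩

lemma one_add_mul_le_half {C₀ ε c : ℝ} (m : ℕ) (hC₀ : 0 ≤ C₀) (hε0 : 0 ≤ ε) (hc1 : 4 * c ≤ 1)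
    (hε : (16 * m + 18) * (1 + C₀) ^ 2 * ε ≤ c / 4) : (1 + C₀) * ε ≤ 1 / 2 := by
  have hle : (18 : ℝ) * (1 + C₀) * ε ≤ (16 * m + 18) * (1 + C₀) ^ 2 * ε := by
    gcongr
    · linarith [m.cast_nonneg (α := ℝ)]
    · nlinarith
  linarith

namespace ThinDomain

variable {m : ℕ} {ε lam μ L c s : ℝ} {Ω : Set (EuclideanSpace ℝ (Fin (m + 1)))}
  {u : EuclideanSpace ℝ (Fin (m + 1)) → ℝ} {φ φd : ℝ → ℝ} {p : EuclideanSpace ℝ (Fin (m + 1))}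

lemma abs_ubarFn_le_of_eq_zero (h : ThinDomain m ε Ω) (hu : ContDiffOn ℝ 1 u (closure Ω))
    (hL : ∀ p ∈ Ω, ‖fderiv ℝ u p‖ ≤ L) (hp : p ∈ Ω) (hup : u p = 0) :
    |ubarFn Ω u (p 0)| ≤ 2 * L * ε := by
  have hle := h.abs_ubarFn_sub_le_of_norm_fderiv_le hu convex_univ (fun q hq _ => hL q hq)
    (h.mem_Ioo hp) (mem_univ _) hp (mem_univ _)
  rw [hup, sub_zero, sub_self, abs_zero, zero_add] at hle
  linarith

lemma isProfile (h : ThinDomain m ε Ω) (hu : ContDiffOn ℝ 1 u (closure Ω)) (hL0 : 0 < L)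
    (hL : ∀ p ∈ Ω, ‖fderiv ℝ u p‖ ≤ L * max (min (p 0) (1 - p 0)) ε) (hε : ε ≤ 1 / 2)
    (huL : ∀ p ∈ Ω, |u p| ≤ L) {l₀ l₁ : ℝ}
    (hl₀ : Tendsto (ubarFn Ω u) (𝓝[>] 0) (𝓝 l₀)) (hcl₀ : 2 * c ≤ l₀)
    (hl₁ : Tendsto (ubarFn Ω u) (𝓝[<] 1) (𝓝 l₁)) (hcl₁ : l₁ ≤ -(2 * c))
    (hc : 0 < c) (hεc : (16 * m + 18) * L * ε ≤ c / 4) :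
    IsProfile (ubarFn Ω u) (axialPrimitive Ω u) L c ((16 * m + 18) * L * ε) := by
  have hU := h.continuousOn_axialPrimitive hu
  have hL1 : ∀ p ∈ Ω, ‖fderiv ℝ u p‖ ≤ L := fun _ =>
    h.norm_fderiv_le_of_le_mul_max hL0.le hL (by linarith)
  have hdiff : ∀ x ∈ Ioo (0 : ℝ) 1, |ubarFn Ω u x - axialPrimitive Ω u x| ≤
      (16 * m + 18) * L * ε := fun x => h.abs_ubarFn_sub_axialPrimitive_le hu hL0 hL hε
  have hzero : |l₀ - axialPrimitive Ω u 0| ≤ (16 * m + 18) * L * ε :=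
    le_of_tendsto (hl₀.sub ((hU 0 (left_mem_Icc.2 zero_le_one)).mono_left
      (nhdsWithin_le_of_mem (Icc_mem_nhdsGT one_pos)))).abs
      (mem_of_superset (Ioo_mem_nhdsGT one_pos) hdiff)
  have hone : |l₁ - axialPrimitive Ω u 1| ≤ (16 * m + 18) * L * ε :=
    le_of_tendsto (hl₁.sub ((hU 1 (right_mem_Icc.2 zero_le_one)).mono_left
      (nhdsWithin_le_of_mem (Icc_mem_nhdsLT one_pos)))).abs
      (mem_of_superset (Ioo_mem_nhdsLT one_pos) hdiff)
  exact {
    abs_le_bound := fun x hx => by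
      simpa only [sub_zero] using h.abs_ubarFn_sub_le (k := 0) (h.bddContinuousOn hu.continuousOn)
        hx fun y hy => by simpa only [sub_zero] using huL _ hy
    abs_sub_le := hdiff
    lipschitz := fun x hx y hy => h.abs_axialPrimitive_sub_le hu hL1 hx hy
    le_zero := by linarith [(abs_le.1 hzero).2]
    one_le := by linarith [(abs_le.1 hone).1]
    pos := hc
    le_div_four := hεc }

lemma abs_sub_le_of_isProfile (h : ThinDomain m ε Ω) (hP : DomainPoincare Ω lam)
    (hu : ContDiffOn ℝ (⊤ : ℕ∞) u (closure Ω)) (hu0 : ∫ p in Ω, u p = 0)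
    (heq : lam * ∫ p in Ω, u p ^ 2 = ∫ p in Ω, ‖gradient u p‖ ^ 2) (hlam : 0 < lam)
    (hprofile : IsProfile (ubarFn Ω u) (axialPrimitive Ω u) L c ((16 * m + 18) * L * ε))
    (hL0 : 0 < L) (hL : ∀ p ∈ Ω, ‖fderiv ℝ u p‖ ≤ L)
    (hφ : NeumannSol (ωvol Ω) μ φ φd) (hfirst : IsFirstEigenfunction (ωvol Ω) μ φ s)
    (hp : p ∈ Ω) (hup : u p = 0) :
    |p 0 - s| ≤ 24 * 64 ^ m * (16 * m + 18) * (L / c) ^ (m + 3) * ε := by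
  have hω := h.doublingWeight
  have hzero : |ubarFn Ω u (p 0)| ≤ (16 * m + 18) * L * ε :=
    (h.abs_ubarFn_le_of_eq_zero (hu.of_le (by simp)) hL hp hup).trans <| by
      have := h.eps_pos
      gcongr
      linarith [m.cast_nonneg (α := ℝ)]
  refine (hprofile.abs_sub_zero_le hω (h.isFluxSolution hP hu hu0 heq.symm hlam.ne') hfirst hlam
    (hφ.le_of_weightedPoincare hω hfirst (h.weightedPoincare hP)) (h.mem_Ioo hp) hzero).trans_eq ?_
  rw [mul_div_assoc 64 L c, mul_pow, pow_add, div_pow L c 3]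
  ring

lemma norm_fderiv_le_of_norm_gradient_le (h : ThinDomain m ε Ω) {C₀ M : ℝ} (hC₀ : 0 ≤ C₀)
    (hgrad : ∀ p ∈ Ω, ‖gradient u p‖ ≤
      C₀ * max (min (p 0) (1 - p 0)) ε * sSup ((fun q => |u q|) '' Ω))
    (hM : 0 ≤ M) (habs : ∀ p ∈ Ω, |u p| ≤ (1 + C₀) * M) (hp : p ∈ Ω) :
    ‖fderiv ℝ u p‖ ≤ (1 + C₀) ^ 2 * M * max (min (p 0) (1 - p 0)) ε := by
  have hsup : sSup ((fun q => |u q|) '' Ω) ≤ (1 + C₀) * M :=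
    csSup_le (h.nonempty_domain.image _) (forall_mem_image.2 habs)
  have hmax : 0 ≤ max (min (p 0) (1 - p 0)) ε := le_max_of_le_right h.eps_pos.le
  rw [← norm_gradient]
  calc ‖gradient u p‖
      ≤ C₀ * max (min (p 0) (1 - p 0)) ε * ((1 + C₀) * M) := (hgrad p hp).trans (by gcongr)
    _ = C₀ * ((1 + C₀) * M * max (min (p 0) (1 - p 0)) ε) := by ring
    _ ≤ (1 + C₀) * ((1 + C₀) * M * max (min (p 0) (1 - p 0)) ε) := by
        gcongr
        linarith
    _ = (1 + C₀) ^ 2 * M * max (min (p 0) (1 - p 0)) ε := by ring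

lemma isProfile_of_one_sub_mul_le (h : ThinDomain m ε Ω) (hu : ContDiffOn ℝ 1 u (closure Ω))
    {C₀ M l₀ l₁ : ℝ} (hC₀ : 0 ≤ C₀) (hM : 0 < M) (habs : ∀ p ∈ Ω, |u p| ≤ (1 + C₀) * M)
    (hL : ∀ p ∈ Ω, ‖fderiv ℝ u p‖ ≤ (1 + C₀) ^ 2 * M * max (min (p 0) (1 - p 0)) ε)
    (hc : 0 < c) (hc1 : 4 * c ≤ 1) (hε : (16 * m + 18) * (1 + C₀) ^ 2 * ε ≤ c / 4)
    (hl₀ : Tendsto (ubarFn Ω u) (𝓝[>] 0) (𝓝 l₀)) (hMl₀ : (1 - C₀ * ε) * M ≤ l₀)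
    (hl₁ : Tendsto (ubarFn Ω u) (𝓝[<] 1) (𝓝 l₁)) (hMl₁ : l₁ ≤ (1 - C₀ * ε) * -(4 * c * M)) :
    IsProfile (ubarFn Ω u) (axialPrimitive Ω u) ((1 + C₀) ^ 2 * M) (c * M)
      ((16 * m + 18) * ((1 + C₀) ^ 2 * M) * ε) := by
  have hε0 := h.eps_pos
  have hκ : 1 + C₀ ≤ (1 + C₀) ^ 2 := by nlinarith
  have hε' := one_add_mul_le_half m hC₀ hε0.le hc1 hε
  have hC₀ε : 0 ≤ C₀ * ε := by positivity
  refine h.isProfile hu (by positivity) hL (by linarith) (fun p hp => (habs p hp).trans (by gcongr))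
    hl₀ ?_ hl₁ ?_ (by positivity) ?_
  · calc 2 * (c * M) ≤ 1 / 2 * M := by nlinarith
      _ ≤ (1 - C₀ * ε) * M := by gcongr; linarith
      _ ≤ l₀ := hMl₀
  · calc l₁ ≤ (1 - C₀ * ε) * -(4 * c * M) := hMl₁
      _ ≤ -(1 / 2 * (4 * c * M)) := by
          rw [mul_neg, neg_le_neg_iff]
          gcongr
          linarith
      _ = -(2 * (c * M)) := by ring
  · calc (16 * m + 18) * ((1 + C₀) ^ 2 * M) * ε = (16 * m + 18) * (1 + C₀) ^ 2 * ε * M := by ring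
      _ ≤ c / 4 * M := by gcongr
      _ = c * M / 4 := by ring

end ThinDomain

theorem nodal_set_within_eps_of_ode_zero_general
    (m : ℕ) (c₀ C₀ : ℝ) (hc₀ : 0 < c₀) (hC₀ : 0 < C₀) :
    ∃ C > (0 : ℝ), ∃ ε₀ > (0 : ℝ),
    ∀ (ε : ℝ) (Ω : Set (EuclideanSpace ℝ (Fin (m + 1))))
      (u : EuclideanSpace ℝ (Fin (m + 1)) → ℝ) (lam μ L0 L1 s₁ : ℝ) (φ φd : ℝ → ℝ),
      ε < ε₀ → ThinDomain m ε Ω →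
      ContDiffOn ℝ (⊤ : ℕ∞) u (closure Ω) →
      (∃ p ∈ Ω, u p ≠ 0) →
      (∫ p in Ω, u p) = 0 →
      0 < lam →
      DomainPoincare Ω lam →
      lam = (∫ p in Ω, ‖gradient u p‖ ^ 2) / (∫ p in Ω, (u p) ^ 2) →
      (∀ p ∈ Ω, ‖gradient u p‖ ≤
        C₀ * max (min (p 0) (1 - p 0)) ε * sSup ((fun q => |u q|) '' Ω)) →
      c₀ * sSup (u '' Ω) ≤ -sInf (u '' Ω) →
      -sInf (u '' Ω) ≤ C₀ * sSup (u '' Ω) →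
      Tendsto (ubarFn Ω u) (𝓝[>] 0) (𝓝 L0) →
      (1 - C₀ * ε) * sSup (u '' Ω) ≤ L0 →
      Tendsto (ubarFn Ω u) (𝓝[<] 1) (𝓝 L1) →
      L1 ≤ (1 - C₀ * ε) * sInf (u '' Ω) →
      NeumannSol (ωvol Ω) μ φ φd →
      μ ≠ 0 →
      0 < φ 0 →
      s₁ ∈ Ioo (0 : ℝ) 1 → φ s₁ = 0 → (∀ s ∈ Ioo (0 : ℝ) 1, φ s = 0 → s = s₁) →
      (∀ p ∈ Ω, u p = 0 → |p 0 - s₁| ≤ C * ε) ∧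
      (∀ p ∈ Ω, ∀ q ∈ Ω, u p = 0 → u q = 0 → |p 0 - q 0| ≤ C * ε) := by
  obtain ⟨c, hc, hc1, hcc₀⟩ : ∃ c > 0, 4 * c ≤ 1 ∧ 4 * c ≤ c₀ :=
    ⟨min 1 c₀ / 4, by positivity, by linarith [min_le_left 1 c₀], by linarith [min_le_right 1 c₀]⟩
  refine ⟨2 * (24 * 64 ^ m * (16 * m + 18) * ((1 + C₀) ^ 2 / c) ^ (m + 3)), by positivity,
    c / (4 * ((16 * m + 18) * (1 + C₀) ^ 2)), by positivity, ?_⟩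
  intro ε Ω u lam μ L0 L1 s₁ φ φd hε hΩ hu ⟨q, hq, huq⟩ hu0 hlam hP hray hgrad hc₀M hC₀M
    hL0 hL0M hL1 hL1M hφ hμ hφ0 hs₁ hφs₁ huniq
  have hε' : (16 * m + 18) * (1 + C₀) ^ 2 * ε ≤ c / 4 := by
    rw [lt_div_iff₀ (by positivity)] at hε
    linarith
  have hε0 := hΩ.eps_pos
  have hC₀ε0 : 0 < C₀ * ε := by positivity
  have hC₀ε := one_add_mul_le_half m hC₀.le hε0.le hc1 hε'
  obtain ⟨B, hB⟩ := (hΩ.bddContinuousOn hu.continuousOn).2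
  have habs : ∀ p ∈ Ω, |u p| ≤ (1 + C₀) * sSup (u '' Ω) := fun p =>
    abs_le_one_add_mul_sSup hB hC₀.le hC₀M
  have hM : 0 < sSup (u '' Ω) :=
    pos_of_mul_pos_right ((abs_pos.2 huq).trans_le (habs q hq)) (by positivity)
  have hL := fun p => hΩ.norm_fderiv_le_of_norm_gradient_le (p := p) hC₀.le hgrad hM.le habs
  have hinf : sInf (u '' Ω) ≤ -(4 * c * sSup (u '' Ω)) :=
    le_neg_of_le_neg ((mul_le_mul_of_nonneg_right hcc₀ hM.le).trans hc₀M)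
  have hprofile := hΩ.isProfile_of_one_sub_mul_le (hu.of_le (by simp)) hC₀.le hM habs hL hc hc1
    hε' hL0 hL0M hL1 (hL1M.trans (mul_le_mul_of_nonneg_left hinf (by linarith)))
  have hsq : ∫ p in Ω, u p ^ 2 ≠ 0 := fun h0 => hlam.ne' (by rw [hray, h0, div_zero])
  have hfirst := hφ.isFirstEigenfunction hΩ.doublingWeight hμ hs₁ hφs₁ huniq hφ0
  have hdist := fun p => hΩ.abs_sub_le_of_isProfile (p := p) hP hu hu0 ((eq_div_iff hsq).1 hray)
    hlam hprofile (by positivity)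
    (fun _ => hΩ.norm_fderiv_le_of_le_mul_max (by positivity) hL (by linarith)) hφ hfirst
  simp only [mul_div_mul_right _ c hM.ne'] at hdist
  refine ⟨fun p hp hup => (hdist p hp hup).trans ?_, fun p hp q hq hup huq => ?_⟩
  · rw [mul_assoc 2]
    exact le_mul_of_one_le_left (by positivity) one_le_two
  · rw [mul_assoc 2, two_mul]
    exact (abs_sub_le _ s₁ _).trans
      (add_le_add (hdist p hp hup) (abs_sub_comm (q 0) s₁ ▸ hdist q hq huq))

/-- Any point of the nodal set of the first Neumann eigenfunction has its
first coordinate within `Cε` of the unique zero `s₁` of the first ODE eigenfunction `φ`;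
in particular the projection of the nodal set to the x-axis has diameter at most `Cε`. -/
theorem nodal_set_within_eps_of_ode_zero
    (m : ℕ) (hm : 1 ≤ m) (c₀ C₀ : ℝ) (hc₀ : 0 < c₀) (hC₀ : 0 < C₀) :
    ∃ C > (0:ℝ), ∃ ε₀ > (0:ℝ),
    ∀ (ε : ℝ) (Ω : Set (EuclideanSpace ℝ (Fin (m+1))))
      (u : EuclideanSpace ℝ (Fin (m+1)) → ℝ) (lam μ L0 L1 s₁ : ℝ) (φ φd : ℝ → ℝ),
      0 < ε → ε < ε₀ →
      IsOpen Ω → Convex ℝ Ω → Bornology.IsBounded Ω →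
      -- smooth boundary
      (∃ F : EuclideanSpace ℝ (Fin (m+1)) → ℝ, ContDiff ℝ (⊤:ℕ∞) F ∧
        Ω = {p | F p < 0} ∧ frontier Ω = {p | F p = 0} ∧
        ∀ p ∈ frontier Ω, gradient F p ≠ 0) →
      -- Ω ⊆ (0,1) × B^{n-1}(ε)
      (∀ x y, mkPt m x y ∈ Ω →
        x ∈ Ioo (0:ℝ) 1 ∧ y ∈ Metric.ball (0 : EuclideanSpace ℝ (Fin m)) ε) →
      -- nonempty cross-sections
      (∀ s ∈ Ioo (0:ℝ) 1, (cross Ω s).Nonempty) →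
      -- u is a nonzero mean-zero smooth Neumann eigenfunction with eigenvalue lam
      ContDiffOn ℝ (⊤:ℕ∞) u (closure Ω) →
      (∃ p ∈ Ω, u p ≠ 0) →
      (∫ p in Ω, u p) = 0 →
      (∀ p ∈ Ω, lap u p = -(lam * u p)) →
      (∀ p ∈ frontier Ω, ∀ v, (∀ z ∈ Ω, ⟪v, z - p⟫ ≤ 0) → ⟪gradient u p, v⟫ = 0) →
      0 < lam →
      -- lam is the smallest nonzero Neumann eigenvalue (variational
      -- characterization), attained at u
      lam = sInf {r | ∃ w : EuclideanSpace ℝ (Fin (m+1)) → ℝ,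
        ContDiffOn ℝ (⊤:ℕ∞) w (closure Ω) ∧ (∃ p ∈ Ω, w p ≠ 0) ∧ (∫ p in Ω, w p) = 0 ∧
        r = (∫ p in Ω, ‖gradient w p‖ ^ 2) / (∫ p in Ω, (w p) ^ 2)} →
      lam = (∫ p in Ω, ‖gradient u p‖ ^ 2) / (∫ p in Ω, (u p) ^ 2) →
      -- facts from [CJK2009], assumed as hypotheses
      (∀ p ∈ Ω, ‖gradient u p‖ ≤
        C₀ * max (min (p 0) (1 - p 0)) ε * sSup ((fun q => |u q|) '' Ω)) →
      c₀ * sSup (u '' Ω) ≤ -sInf (u '' Ω) →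
      -sInf (u '' Ω) ≤ C₀ * sSup (u '' Ω) →
      Tendsto (ubarFn Ω u) (𝓝[>] 0) (𝓝 L0) →
      (1 - C₀ * ε) * sSup (u '' Ω) ≤ L0 →
      Tendsto (ubarFn Ω u) (𝓝[<] 1) (𝓝 L1) →
      L1 ≤ (1 - C₀ * ε) * sInf (u '' Ω) →
      -- φ is a first Neumann eigenfunction of the ODE
      NeumannSol (ωvol Ω) μ φ φd →
      0 < μ →
      (∀ μ', 0 < μ' → IsNeumannEigenvalue (ωvol Ω) μ' → μ ≤ μ') →
      -- normalization φ(0) = lim_{x→0+} ū(x) > 0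
      φ 0 = L0 → 0 < L0 →
      -- s₁ is the unique zero of φ in (0,1)
      s₁ ∈ Ioo (0:ℝ) 1 → φ s₁ = 0 → (∀ s ∈ Ioo (0:ℝ) 1, φ s = 0 → s = s₁) →
      (∀ p ∈ Ω, u p = 0 → |p 0 - s₁| ≤ C * ε) ∧
      (∀ p ∈ Ω, ∀ q ∈ Ω, u p = 0 → u q = 0 → |p 0 - q 0| ≤ C * ε) := by
  obtain ⟨C, hC, ε₀, hε₀, hgeneral⟩ := nodal_set_within_eps_of_ode_zero_general m c₀ C₀ hc₀ hC₀
  refine ⟨C, hC, ε₀, hε₀, fun ε Ω u lam μ L0 L1 s₁ φ φd _ hε hopen hconv hbdd _ hsub hne hu hu_ne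
    hu0 _ _ hlam hmin hray hgrad hc₀M hC₀M hL0 hL0M hL1 hL1M hφ hμ _ hφL0 hL0pos => ?_⟩
  exact hgeneral ε Ω u lam μ L0 L1 s₁ φ φd hε ⟨hopen, hconv, hsub, hne⟩ hu hu_ne hu0 hlam
    (domainPoincare_of_eq_sInf hopen hbdd.isCompact_closure hmin) hray hgrad hc₀M hC₀M hL0 hL0M
    hL1 hL1M hφ hμ.ne' (hφL0 ▸ hL0pos)
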